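/- The set of pairs of integers (n,m) with n ≥ 2, m ≥ 2 and F_n - T_m = -22 is exactly {(3,7), (26,21)}; that is, -22 = 2 - 24 = 121393 - 121415 are the only representations of -22 as a difference of a Fibonacci and a Tribonacci number with indices at least 2. -/

import Mathlib

/-- The Tribonacci sequence: T 0 = 0, T 1 = T 2 = 1,
    T (k+3) = T (k+2) + T (k+1) + T k. -/
def trib : ℕ → ℤ
  | 0 => 0
  | 1 => 1
  | 2 => 1
  | n + 3 => trib (n + 2) + trib (n + 1) + trib n

/-!
A sieve modulo `M ≈ 6 · 10 ^ 16` leaves only the residue classes of nine integer solutions, the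
indices being extended to all of `ℤ`. A larger solution `n = n₀ + M x`, `m = m₀ + M y` makes
`log η - M log X` extremely small, where `X = α ^ y / φ ^ x` and `η` is the quotient of the dominant
terms at `(n₀, m₀)`. Since `M` is large, Gelfond's method bounds this linear form from below:
combinations of binomial polynomials times exponentials that nearly vanish at the points `M s + r`
with `r < R` are extrapolated by interpolation to all `r < M`, where the vanishing contradicts a
zero estimate of Vandermonde type.
-/

section Multipliers

open Matrix

variable {ι κ σ : Type*} [Fintype ι] [Fintype κ]

/-- Multiplication by `w` maps each `b i` to an integer combination of the `b j`, and the rows of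
the resulting matrix have `ℓ¹`-norm at most `B`. For `b` a basis of an order in a number field,
this says that `w` belongs to that order and bounds its size. -/
def IsIntegralMultiplier (b : ι → ℝ) (B w : ℝ) : Prop :=
  ∃ A : Matrix ι ι ℤ, A.map (↑) *ᵥ b = w • b ∧ ∀ i, ∑ j, |(A i j : ℝ)| ≤ B

namespace IsIntegralMultiplier

variable {b : ι → ℝ} {B B' w w' : ℝ}

lemma mono (hw : IsIntegralMultiplier b B w) (hB : B ≤ B') : IsIntegralMultiplier b B' w :=
  let ⟨A, hA, hAB⟩ := hw
  ⟨A, hA, fun i => (hAB i).trans hB⟩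

lemma intCast (n : ℤ) : IsIntegralMultiplier b |(n : ℝ)| n := by
  classical
  refine ⟨diagonal fun _ => n, funext fun i => ?_, fun i => ?_⟩
  · simp [diagonal_map]
  · simp [diagonal_apply, apply_ite]

lemma natCast (n : ℕ) : IsIntegralMultiplier b n n := by
  simpa using intCast (b := b) n

lemma one : IsIntegralMultiplier b 1 1 := by
  simpa using natCast (b := b) 1

lemma mul (hw : IsIntegralMultiplier b B w) (hw' : IsIntegralMultiplier b B' w') :
    IsIntegralMultiplier b (B * B') (w * w') := by
  obtain ⟨A, hA, hAB⟩ := hw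
  obtain ⟨A', hA', hAB'⟩ := hw'
  refine ⟨A * A', ?_, fun i => ?_⟩
  · rw [show (A * A').map ((↑) : ℤ → ℝ) = A.map (↑) * A'.map (↑) from
      Matrix.map_mul (f := Int.castRingHom ℝ), ← mulVec_mulVec, hA', mulVec_smul, hA, smul_smul,
      mul_comm w']
  · have hB' : 0 ≤ B' := (Finset.sum_nonneg fun _ _ => abs_nonneg _).trans (hAB' i)
    calc ∑ k, |((A * A') i k : ℝ)|
        ≤ ∑ k, ∑ j, |(A i j : ℝ)| * |(A' j k : ℝ)| := Finset.sum_le_sum fun k _ => by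
          simpa only [mul_apply, Int.cast_sum, Int.cast_mul, abs_mul] using
            Finset.abs_sum_le_sum_abs (fun j => (A i j : ℝ) * A' j k) Finset.univ
      _ = ∑ j, |(A i j : ℝ)| * ∑ k, |(A' j k : ℝ)| := by
          rw [Finset.sum_comm]
          simp only [Finset.mul_sum]
      _ ≤ ∑ j, |(A i j : ℝ)| * B' := by gcongr with j; exact hAB' j
      _ ≤ B * B' := by rw [← Finset.sum_mul]; gcongr; exact hAB i

lemma pow (hw : IsIntegralMultiplier b B w) (n : ℕ) :
    IsIntegralMultiplier b (B ^ n) (w ^ n) := by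
  induction n with
  | zero => simpa using one
  | succ n ih => simpa only [pow_succ] using ih.mul hw

lemma zpow (hw : IsIntegralMultiplier b B w) (hw' : IsIntegralMultiplier b B w⁻¹)
    (n : ℤ) : IsIntegralMultiplier b (B ^ n.natAbs) (w ^ n) := by
  obtain ⟨k, rfl | rfl⟩ := n.eq_nat_or_neg
  · simpa using hw.pow k
  · simpa using hw'.pow k

lemma sum (s : Finset σ) {B w : σ → ℝ} (hw : ∀ x ∈ s, IsIntegralMultiplier b (B x) (w x)) :
    IsIntegralMultiplier b (∑ x ∈ s, B x) (∑ x ∈ s, w x) := by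
  classical
  choose! A hA hAB using hw
  refine ⟨∑ x ∈ s, A x, ?_, fun i => ?_⟩
  · rw [show (∑ x ∈ s, A x).map ((↑) : ℤ → ℝ) = ∑ x ∈ s, (A x).map (↑) from
      map_sum (Int.castRingHom ℝ).mapMatrix A s, sum_mulVec, Finset.sum_smul]
    exact Finset.sum_congr rfl hA
  · calc ∑ j, |((∑ x ∈ s, A x) i j : ℝ)|
        ≤ ∑ j, ∑ x ∈ s, |(A x i j : ℝ)| := Finset.sum_le_sum fun j _ => by
          simpa only [Matrix.sum_apply, Int.cast_sum] using
            Finset.abs_sum_le_sum_abs (fun x => (A x i j : ℝ)) s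
      _ = ∑ x ∈ s, ∑ j, |(A x i j : ℝ)| := Finset.sum_comm
      _ ≤ ∑ x ∈ s, B x := Finset.sum_le_sum fun x hx => hAB x hx i

lemma sum_intCast_mul (s : Finset σ) {p : σ → ℤ} {w : σ → ℝ} {P : ℝ}
    (hp : ∀ x ∈ s, |(p x : ℝ)| ≤ P) (hB : 0 ≤ B) (hw : ∀ x ∈ s, IsIntegralMultiplier b B (w x)) :
    IsIntegralMultiplier b (s.card * (P * B)) (∑ x ∈ s, p x * w x) := by
  rw [← nsmul_eq_mul, ← Finset.sum_const]
  exact sum s fun x hx =>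
    ((intCast (p x)).mul (hw x hx)).mono (mul_le_mul_of_nonneg_right (hp x hx) hB)

lemma tensor_left (c : κ → ℝ) (hw : IsIntegralMultiplier b B w) :
    IsIntegralMultiplier (fun x : ι × κ => b x.1 * c x.2) B w := by
  classical
  obtain ⟨A, hA, hAB⟩ := hw
  refine ⟨of fun x y => if x.2 = y.2 then A x.1 y.1 else 0, funext fun x => ?_, fun x => ?_⟩
  · have hx : ∑ j, (A x.1 j : ℝ) * b j = w * b x.1 := congrFun hA x.1
    simp [mulVec, dotProduct, Fintype.sum_prod_type, ← mul_assoc, ← Finset.sum_mul, hx]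
  · simpa [Fintype.sum_prod_type, apply_ite] using hAB x.1

lemma tensor_right (b : ι → ℝ) {c : κ → ℝ} (hw : IsIntegralMultiplier c B w) :
    IsIntegralMultiplier (fun x : ι × κ => b x.1 * c x.2) B w := by
  classical
  obtain ⟨A, hA, hAB⟩ := hw
  refine ⟨of fun x y => if x.1 = y.1 then A x.2 y.2 else 0, funext fun x => ?_, fun x => ?_⟩
  · have hx : ∑ j, (A x.2 j : ℝ) * c j = w * c x.2 := congrFun hA x.2
    simp [mulVec, dotProduct, Fintype.sum_prod_type_right, mul_left_comm, ← Finset.mul_sum, hx]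
  · simpa [Fintype.sum_prod_type_right, apply_ite] using hAB x.2

open scoped Matrix.Norms.Elementwise in
lemma exists_sum_eq_zero {ρ : Type*} [Fintype σ] [Fintype ρ] [Nonempty ι] [Nonempty ρ]
    (hb : LinearIndependent ℤ b) (hσ : Fintype.card σ = 2 * (Fintype.card ι * Fintype.card ρ))
    {w : ρ → σ → ℝ} (hB : 1 ≤ B) (hw : ∀ i x, IsIntegralMultiplier b B (w i x)) :
    ∃ p : σ → ℤ, p ≠ 0 ∧ (∀ x, |(p x : ℝ)| ≤ Fintype.card σ * B) ∧
      ∀ i, ∑ x, p x * w i x = 0 := by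
  obtain ⟨j₀⟩ := ‹Nonempty ι›
  choose A hA hAB using hw
  -- As `b j₀ ≠ 0`, the row `j₀` of the multipliers alone yields the equations to be solved.
  let C : Matrix (ι × ρ) σ ℤ := of fun y x => A y.2 x j₀ y.1
  have hcard : Fintype.card (ι × ρ) = Fintype.card ι * Fintype.card ρ := Fintype.card_prod ι ρ
  have hpos : 0 < Fintype.card ι * Fintype.card ρ := Nat.mul_pos Fintype.card_pos Fintype.card_pos
  have hC : ‖C‖ ≤ B := by
    refine (norm_le_iff (by positivity)).2 fun y x => ?_
    rw [Int.norm_eq_abs]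
    exact (Finset.single_le_sum (f := fun j => |(A y.2 x j₀ j : ℝ)|) (fun _ _ => abs_nonneg _)
      (Finset.mem_univ y.1)).trans (hAB y.2 x j₀)
  obtain ⟨p, hp0, hp, hpn⟩ := Int.Matrix.exists_ne_zero_int_vec_norm_le C (by lia) (by lia)
  have hexp : (Fintype.card (ι × ρ) : ℝ) / (Fintype.card σ - Fintype.card (ι × ρ)) = 1 := by
    rw [hσ, hcard]
    push_cast
    have hpos' : (0 : ℝ) < Fintype.card ι * Fintype.card ρ := mod_cast hpos
    rw [div_eq_one_iff_eq] <;> linarith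
  rw [hexp, Real.rpow_one] at hpn
  refine ⟨p, hp0, fun x => ?_, fun i => ?_⟩
  · rw [← Int.norm_eq_abs]
    exact (norm_le_pi_norm p x).trans (hpn.trans (by gcongr; exact max_le hB hC))
  · refine (mul_eq_zero.1 ?_).resolve_right (hb.ne_zero j₀)
    calc (∑ x, p x * w i x) * b j₀ = ∑ x, p x * ∑ j, (A i x j₀ j : ℝ) * b j := by
          rw [Finset.sum_mul]
          refine Finset.sum_congr rfl fun x _ => ?_
          have hx : ∑ j, (A i x j₀ j : ℝ) * b j = w i x * b j₀ := congrFun (hA i x) j₀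
          rw [hx, mul_assoc]
      _ = ∑ j, ((∑ x, A i x j₀ j * p x : ℤ) : ℝ) * b j := by
          simp only [Finset.mul_sum, Int.cast_sum, Int.cast_mul, Finset.sum_mul]
          rw [Finset.sum_comm]
          exact Finset.sum_congr rfl fun j _ => Finset.sum_congr rfl fun x _ => by ring
      _ = 0 := Finset.sum_eq_zero fun j _ => by
          rw [show ∑ x, A i x j₀ j * p x = 0 from congrFun hp (j, i), Int.cast_zero, zero_mul]

end IsIntegralMultiplier

lemma norm_le_of_mem_roots_charpoly [DecidableEq ι] {A : Matrix ι ι ℂ} {B : ℝ}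
    (hA : ∀ i, ∑ j, ‖A i j‖ ≤ B) {z : ℂ} (hz : z ∈ A.charpoly.roots) : ‖z‖ ≤ B := by
  have hz' : Module.End.HasEigenvalue (toLin' A) z := by
    rw [Module.End.hasEigenvalue_iff_isRoot_charpoly, charpoly_toLin']
    exact Polynomial.isRoot_of_mem_roots hz
  obtain ⟨k, hk⟩ := eigenvalue_mem_ball hz'
  rw [mem_closedBall_iff_norm] at hk
  calc ‖z‖ ≤ ‖A k k‖ + ‖z - A k k‖ := by simpa using norm_add_le (A k k) (z - A k k)
    _ ≤ ‖A k k‖ + ∑ j ∈ Finset.univ.erase k, ‖A k j‖ := by gcongr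
    _ = ∑ j, ‖A k j‖ := Finset.add_sum_erase _ (fun j => ‖A k j‖) (Finset.mem_univ k)
    _ ≤ B := hA k

lemma det_ne_zero_of_map_mulVec_eq_smul [DecidableEq ι] {A : Matrix ι ι ℤ} {b : ι → ℝ} {w : ℝ}
    (hb : LinearIndependent ℤ b) (hA : A.map (↑) *ᵥ b = w • b) (hw : w ≠ 0) : A.det ≠ 0 := by
  intro h
  obtain ⟨v, hv, hvA⟩ := exists_vecMul_eq_zero_iff.2 h
  refine hv (funext (Fintype.linearIndependent_iff.1 hb v ?_))
  have hvw : ((↑) ∘ v : ι → ℝ) ⬝ᵥ (w • b) = 0 := by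
    rw [← hA, dotProduct_mulVec, show ((↑) ∘ v : ι → ℝ) ᵥ* A.map (↑) = (↑) ∘ (v ᵥ* A) from
      funext fun i => (RingHom.map_vecMul (Int.castRingHom ℝ) A v i).symm, hvA]
    simp [dotProduct]
  rw [dotProduct_smul, smul_eq_zero_iff_right hw] at hvw
  simpa [dotProduct] using hvw

lemma ofReal_mem_roots_charpoly [DecidableEq ι] {A : Matrix ι ι ℤ} {b : ι → ℝ} {w : ℝ}
    (hA : A.map (↑) *ᵥ b = w • b) (hb : b ≠ 0) :
    (w : ℂ) ∈ (A.map (Int.castRingHom ℂ)).charpoly.roots := by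
  rw [Polynomial.mem_roots (charpoly_monic _).ne_zero, Polynomial.IsRoot, eval_charpoly]
  refine exists_mulVec_eq_zero_iff.1 ⟨fun i => (b i : ℂ), fun h => hb (funext fun i => ?_),
    funext fun i => ?_⟩
  · simpa using congrFun h i
  · have hi : ∑ j, (A i j : ℝ) * b j = w * b i := congrFun hA i
    have hiℂ : ∑ j, (A i j : ℂ) * b j = w * b i := mod_cast congrArg ((↑) : ℝ → ℂ) hi
    rw [sub_mulVec]
    simp [mulVec, dotProduct, hiℂ, scalar_apply]

/-- The matrix of `w` has nonzero integral determinant, and its other eigenvalues are bounded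
by `B`. -/
lemma IsIntegralMultiplier.one_le_abs_mul_pow [Nonempty ι] {b : ι → ℝ} {B w : ℝ}
    (hb : LinearIndependent ℤ b) (hw : IsIntegralMultiplier b B w) (hw0 : w ≠ 0) :
    1 ≤ |w| * B ^ (Fintype.card ι - 1) := by
  classical
  obtain ⟨A, hA, hAB⟩ := hw
  let i₀ := Classical.arbitrary ι
  lift B to NNReal using (Finset.sum_nonneg fun _ _ => abs_nonneg _).trans (hAB i₀)
  set C : Matrix ι ι ℂ := A.map (Int.castRingHom ℂ)
  obtain ⟨s, hs⟩ := Multiset.exists_cons_of_mem <|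
    ofReal_mem_roots_charpoly hA fun h => hb.ne_zero i₀ (congrFun h i₀)
  have hcard : s.card = Fintype.card ι - 1 := by
    have := congrArg Multiset.card hs
    rw [IsAlgClosed.card_roots_eq_natDegree, charpoly_natDegree_eq_dim, Multiset.card_cons] at this
    lia
  have hsB : ‖s.prod‖₊ ≤ B ^ (Fintype.card ι - 1) := by
    rw [← hcard, show ‖s.prod‖₊ = (s.map (‖·‖₊)).prod from map_multiset_prod nnnormHom s,
      ← Multiset.card_map (‖·‖₊) s]
    refine Multiset.prod_le_pow_card _ _ fun y hy => ?_
    obtain ⟨z, hz, rfl⟩ := Multiset.mem_map.1 hy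
    exact norm_le_of_mem_roots_charpoly (fun i => by simpa using hAB i)
      (hs ▸ Multiset.mem_cons_of_mem hz)
  calc (1 : ℝ) ≤ ‖(A.det : ℂ)‖ := by
        rw [Complex.norm_intCast]
        exact_mod_cast Int.one_le_abs (det_ne_zero_of_map_mulVec_eq_smul hb hA hw0)
    _ = ‖C.det‖ := congrArg norm (RingHom.map_det (Int.castRingHom ℂ) A)
    _ = |w| * ‖s.prod‖ := by
        rw [det_eq_prod_roots_charpoly, hs, Multiset.prod_cons, norm_mul, Complex.norm_real,
          Real.norm_eq_abs]
    _ ≤ |w| * B ^ (Fintype.card ι - 1) := by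
        gcongr
        exact_mod_cast hsB

end Multipliers

section Interpolation

open Metric Polynomial Finset

variable {E : Type*} [NormedAddCommGroup E] [NormedSpace ℂ E]

lemma exists_differentiable_eq_prod_smul [CompleteSpace E] {f : ℂ → E} (hf : Differentiable ℂ f)
    {s : Finset ℂ} (hs : ∀ a ∈ s, f a = 0) :
    ∃ g : ℂ → E, Differentiable ℂ g ∧ ∀ z, f z = (∏ a ∈ s, (z - a)) • g z := by
  induction s using Finset.induction generalizing f with
  | empty => exact ⟨f, hf, by simp⟩
  | insert a s ha ih =>
    have hslope : ∀ z, (z - a) • dslope f a z = f z := fun z => by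
      rw [sub_smul_dslope, hs a (mem_insert_self a s), sub_zero]
    obtain ⟨g, hg, hfg⟩ := ih (f := dslope f a)
      (differentiableOn_univ.1 <|
        (Complex.differentiableOn_dslope Filter.univ_mem).2 hf.differentiableOn)
      fun c hc => by
        have hca : c - a ≠ 0 := sub_ne_zero.2 (ne_of_mem_of_not_mem hc ha)
        exact (smul_eq_zero.1 <| (hslope c).trans (hs c (mem_insert_of_mem hc))).resolve_left hca
    exact ⟨g, hg, fun z => by rw [prod_insert ha, mul_smul, ← hfg, hslope]⟩

lemma norm_le_of_forall_mem_eq_zero [CompleteSpace E] {f : ℂ → E} (hf : Differentiable ℂ f)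
    {s : Finset ℂ} (hs : ∀ a ∈ s, f a = 0) {Z r A : ℝ} (hZ : ∀ a ∈ s, ‖a‖ ≤ Z) (hr : 0 < r)
    (hZr : 0 < r + Z) (hA : ∀ z ∈ sphere 0 (r + Z), ‖f z‖ ≤ A) {z : ℂ} (hz : ‖z‖ ≤ r + Z) {D : ℝ}
    (hD : ∀ a ∈ s, ‖z - a‖ ≤ D) : ‖f z‖ ≤ A * (D / r) ^ s.card := by
  obtain ⟨g, hg, hfg⟩ := exists_differentiable_eq_prod_smul hf hs
  have hg_sphere : ∀ w ∈ frontier (ball (0 : ℂ) (r + Z)), ‖g w‖ ≤ A / r ^ s.card := by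
    intro w hw
    rw [frontier_ball 0 hZr.ne'] at hw
    rw [le_div_iff₀ (by positivity)]
    refine le_trans ?_ (hA w hw)
    rw [hfg, norm_smul, norm_prod, mul_comm, ← prod_const]
    gcongr with a ha
    have := norm_sub_norm_le w a
    rw [mem_sphere_zero_iff_norm.1 hw] at this
    linarith [hZ a ha]
  have hgz : ‖g z‖ ≤ A / r ^ s.card :=
    Complex.norm_le_of_forall_mem_frontier_norm_le isBounded_ball hg.diffContOnCl hg_sphere
      (by rwa [closure_ball 0 hZr.ne', mem_closedBall_zero_iff])
  calc ‖f z‖ = (∏ a ∈ s, ‖z - a‖) * ‖g z‖ := by rw [hfg, norm_smul, norm_prod]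
    _ ≤ D ^ s.card * (A / r ^ s.card) := by
        rw [← prod_const]
        exact mul_le_mul (prod_le_prod (fun _ _ => norm_nonneg _) hD) hgz (norm_nonneg _)
          (prod_nonneg fun a ha => (norm_nonneg _).trans (hD a ha))
    _ = A * (D / r) ^ s.card := by rw [div_pow]; ring

lemma factorial_card_le_prod {s : Finset ℕ} (hs : ∀ b ∈ s, 0 < b) :
    s.card.factorial ≤ ∏ b ∈ s, b := by
  induction s using Finset.induction_on_max with
  | empty => simp
  | insert a s hmax ih =>
    have ha : a ∉ s := fun h => (hmax a h).false
    have hcard : s.card + 1 ≤ a := by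
      have h0 : 0 < a := hs a (mem_insert_self a s)
      have := card_le_card (t := Ioo 0 a) fun b hb =>
        mem_Ioo.2 ⟨hs b (mem_insert_of_mem hb), hmax b hb⟩
      rw [Nat.card_Ioo] at this
      lia
    rw [card_insert_of_notMem ha, prod_insert ha, Nat.factorial_succ]
    exact Nat.mul_le_mul hcard (ih fun b hb => hs b (mem_insert_of_mem hb))

lemma factorial_card_le_prod_of_injOn {s : Finset ℕ} {f : ℕ → ℕ} (hf : Set.InjOn f s)
    (hs : ∀ b ∈ s, 0 < f b) : s.card.factorial ≤ ∏ b ∈ s, f b := by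
  rw [← card_image_of_injOn hf, ← prod_image (f := fun b => b) hf]
  exact factorial_card_le_prod (by simpa using hs)

lemma factorial_card_le_two_pow_mul_prod {s : Finset ℕ} {a : ℕ} (ha : a ∉ s) :
    s.card.factorial ≤ 2 ^ s.card * ∏ b ∈ s, (a - b : ℤ).natAbs := by
  have hsplit := card_filter_add_card_filter_not (s := s) (· < a)
  have hpos : ∀ b ∈ s, 0 < (a - b : ℤ).natAbs := fun b hb => by
    have : b ≠ a := ne_of_mem_of_not_mem hb ha
    lia
  have hlt : (s.filter (· < a)).card.factorial ≤ ∏ b ∈ s with b < a, (a - b : ℤ).natAbs :=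
    factorial_card_le_prod_of_injOn (fun b hb c hc h => by
      simp only [coe_filter, Set.mem_ofPred_eq] at hb hc
      lia) fun b hb => hpos b (mem_filter.1 hb).1
  have hge : (s.filter (¬ · < a)).card.factorial ≤ ∏ b ∈ s with ¬ b < a, (a - b : ℤ).natAbs :=
    factorial_card_le_prod_of_injOn (fun b hb c hc h => by
      simp only [coe_filter, Set.mem_ofPred_eq] at hb hc
      lia) fun b hb => hpos b (mem_filter.1 hb).1
  rw [← prod_filter_mul_prod_filter_not s (· < a), ← hsplit,
    ← Nat.add_choose_mul_factorial_mul_factorial, mul_assoc]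
  exact Nat.mul_le_mul (Nat.choose_le_two_pow _ _) (Nat.mul_le_mul hlt hge)

lemma norm_eval_lagrange_basis_le {s : Finset ℕ} {a : ℕ} (ha : a ∈ s) {W : ℝ} {z : ℂ}
    (hz : ∀ b ∈ s, ‖z - b‖ ≤ W) :
    ‖(Lagrange.basis s ((↑) : ℕ → ℂ) a).eval z‖ ≤
      (2 * W) ^ (s.card - 1) / (s.card - 1).factorial := by
  have hden : ((s.card - 1).factorial : ℝ) ≤
      2 ^ (s.card - 1) * ∏ b ∈ s.erase a, ‖(a - b : ℂ)‖ := by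
    have hnorm : ∀ b : ℕ, ‖(a - b : ℂ)‖ = (a - b : ℤ).natAbs := fun b => by
      rw [Nat.cast_natAbs, Int.cast_abs, ← Complex.norm_intCast]
      push_cast
      rfl
    simp only [hnorm]
    rw [← card_erase_of_mem ha]
    exact_mod_cast factorial_card_le_two_pow_mul_prod (notMem_erase a s)
  have hnum : ∏ b ∈ s.erase a, ‖z - b‖ ≤ W ^ (s.card - 1) := by
    rw [← card_erase_of_mem ha, ← prod_const]
    exact prod_le_prod (fun _ _ => norm_nonneg _) fun b hb => hz b (mem_of_mem_erase hb)
  have hW : 0 ≤ W := (norm_nonneg _).trans (hz a ha)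
  have : (0 : ℝ) < ∏ b ∈ s.erase a, ‖(a - b : ℂ)‖ := prod_pos fun b hb =>
    norm_pos_iff.2 (sub_ne_zero.2 (Nat.cast_injective.ne (ne_of_mem_erase hb).symm))
  calc ‖(Lagrange.basis s ((↑) : ℕ → ℂ) a).eval z‖
      = (∏ b ∈ s.erase a, ‖z - b‖) / ∏ b ∈ s.erase a, ‖(a - b : ℂ)‖ := by
        simp [Lagrange.basis, Lagrange.basisDivisor, eval_prod, prod_mul_distrib, prod_inv_distrib,
          norm_prod, div_eq_inv_mul]
    _ ≤ W ^ (s.card - 1) / ((s.card - 1).factorial / 2 ^ (s.card - 1)) := by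
        gcongr
        rwa [div_le_iff₀' (by positivity)]
    _ = (2 * W) ^ (s.card - 1) / (s.card - 1).factorial := by rw [mul_pow]; field_simp

lemma norm_eval_lagrange_interpolate_le {s : Finset ℕ} {r : ℕ → ℂ} {ε W : ℝ} {z : ℂ}
    (hε : 0 ≤ ε) (hr : ∀ a ∈ s, ‖r a‖ ≤ ε) (hz : ∀ b ∈ s, ‖z - b‖ ≤ W) :
    ‖(Lagrange.interpolate s ((↑) : ℕ → ℂ) r).eval z‖ ≤
      s.card * (ε * ((2 * W) ^ (s.card - 1) / (s.card - 1).factorial)) := by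
  simp only [Lagrange.interpolate_apply, eval_finsetSum, eval_mul, eval_C]
  refine (norm_sum_le_of_le s fun a ha => ?_).trans_eq (by rw [sum_const, nsmul_eq_mul])
  rw [norm_mul]
  exact mul_le_mul (hr a ha) (norm_eval_lagrange_basis_le ha hz) (norm_nonneg _) hε

theorem norm_natCast_le_of_forall_mem_norm_le {f : ℂ → ℂ} (hf : Differentiable ℂ f)
    {s : Finset ℕ} {Z t A ε : ℝ} (hZ : 0 < Z) (ht : 1 ≤ t) (hε : 0 ≤ ε)
    (hs : ∀ a ∈ s, (a : ℝ) ≤ Z) (hA : ∀ z ∈ sphere 0 ((t + 1) * Z), ‖f z‖ ≤ A)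
    (hfs : ∀ a ∈ s, ‖f a‖ ≤ ε) {x : ℕ} (hx : (x : ℝ) ≤ Z) :
    ‖f x‖ ≤ A / t ^ s.card +
      2 * (s.card * (ε * ((2 * ((t + 2) * Z)) ^ (s.card - 1) / (s.card - 1).factorial))) := by
  set lam := s.card * (ε * ((2 * ((t + 2) * Z)) ^ (s.card - 1) / (s.card - 1).factorial))
  let P := Lagrange.interpolate s ((↑) : ℕ → ℂ) fun a => f a
  have hP : ∀ z : ℂ, ‖z‖ ≤ (t + 1) * Z → ‖P.eval z‖ ≤ lam := fun z hz =>
    norm_eval_lagrange_interpolate_le hε hfs fun b hb => calc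
      ‖z - b‖ ≤ ‖z‖ + ‖(b : ℂ)‖ := norm_sub_le _ _
      _ ≤ (t + 1) * Z + Z := add_le_add hz (by simpa using hs b hb)
      _ = (t + 2) * Z := by ring
  have hfP : ‖f x - P.eval (x : ℂ)‖ ≤ (A + lam) * (Z / (t * Z)) ^ s.card := by
    have htZ : t * Z + Z = (t + 1) * Z := by ring
    rw [← card_map (Nat.castEmbedding (R := ℂ))]
    refine norm_le_of_forall_mem_eq_zero (f := fun z => f z - P.eval z) (Z := Z)
      (hf.sub P.differentiable) ?_ ?_ (by positivity) (by positivity) ?_ ?_ ?_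
    · refine forall_mem_map.2 fun a ha => ?_
      rw [Nat.castEmbedding_apply, Lagrange.eval_interpolate_at_node _ Nat.cast_injective.injOn ha,
        sub_self]
    · simpa using hs
    · intro z hz
      rw [htZ, mem_sphere_zero_iff_norm] at hz
      exact (norm_sub_le _ _).trans <|
        add_le_add (hA z (mem_sphere_zero_iff_norm.2 hz)) (hP z hz.le)
    · rw [htZ, Complex.norm_natCast]
      nlinarith
    · refine forall_mem_map.2 fun a ha => ?_
      rw [Nat.castEmbedding_apply, ← Complex.ofReal_natCast, ← Complex.ofReal_natCast,
        ← Complex.ofReal_sub, Complex.norm_real]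
      exact abs_le.2 ⟨by linarith [hs a ha, x.cast_nonneg (α := ℝ)],
        by linarith [a.cast_nonneg (α := ℝ)]⟩
  have hlam : lam / t ^ s.card ≤ lam := div_le_self (by positivity) (one_le_pow₀ ht)
  calc ‖f x‖ ≤ ‖f x - P.eval (x : ℂ)‖ + ‖P.eval (x : ℂ)‖ := norm_le_norm_sub_add _ _
    _ ≤ (A + lam) * (Z / (t * Z)) ^ s.card + lam :=
        add_le_add hfP (hP x (by rw [Complex.norm_natCast]; nlinarith))
    _ = A / t ^ s.card + lam / t ^ s.card + lam := by
        rw [mul_comm t, ← div_div, div_self hZ.ne', one_div, inv_pow]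
        ring
    _ ≤ A / t ^ s.card + 2 * lam := by linarith

end Interpolation

section ZeroEstimate

open Polynomial Finset Matrix

variable {ι R F : Type*}

lemma coeff_prod_sum_of_natDegree_le [CommSemiring R] (s : Finset ι) {p : ι → R[X]} {d : ι → ℕ}
    (hp : ∀ i ∈ s, (p i).natDegree ≤ d i) :
    (∏ i ∈ s, p i).coeff (∑ i ∈ s, d i) = ∏ i ∈ s, (p i).coeff (d i) := by
  classical
  induction s using Finset.induction with
  | empty => simp
  | insert a s ha ih =>
    have hs : ∀ i ∈ s, (p i).natDegree ≤ d i := fun i hi => hp i (mem_insert_of_mem hi)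
    rw [prod_insert ha, sum_insert ha, prod_insert ha,
      coeff_mul_add_eq_of_natDegree_le (hp a (mem_insert_self a s))
        ((natDegree_prod_le s p).trans (sum_le_sum hs)), ih hs]

variable [Fintype ι]

section PolynomialMatrix

variable [DecidableEq ι] [CommRing R] {A : Matrix ι ι R[X]} {d : ι → ℕ}

lemma natDegree_det_le_sum (hA : ∀ i j, (A i j).natDegree ≤ d j) :
    A.det.natDegree ≤ ∑ j, d j := by
  rw [det_apply]
  refine natDegree_sum_le_of_forall_le _ _ fun σ _ => ?_
  exact (natDegree_smul_le _ _).trans <| (natDegree_prod_le _ _).trans <|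
    sum_le_sum fun j _ => hA _ j

lemma coeff_det_sum (hA : ∀ i j, (A i j).natDegree ≤ d j) :
    A.det.coeff (∑ j, d j) = det (of fun i j => (A i j).coeff (d j)) := by
  simp only [det_apply, finsetSum_coeff, coeff_smul]
  exact sum_congr rfl fun σ _ => by
    rw [coeff_prod_sum_of_natDegree_le _ fun j _ => hA _ j]
    rfl

end PolynomialMatrix

/-- The top coefficient of `det (P_j (X + i) * u_j ^ i)` is essentially a Vandermonde
determinant. -/
lemma card_le_sum_natDegree_of_forall_sum_eq_zero [Field F] {n : ℕ} {P : Fin n → F[X]}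
    {u : Fin n → F} (hP : ∀ j, P j ≠ 0) (hu : Function.Injective u) {s : Finset F}
    (hs : ∀ x ∈ s, ∃ v : Fin n → F, v ≠ 0 ∧
      ∀ i : Fin n, ∑ j, (P j).eval (x + (i : ℕ)) * u j ^ (i : ℕ) * v j = 0) :
    s.card ≤ ∑ j, (P j).natDegree := by
  let A : Matrix (Fin n) (Fin n) F[X] :=
    of fun i j => taylor ((i : ℕ) : F) (P j) * C (u j ^ (i : ℕ))
  have hA : ∀ i j, (A i j).natDegree ≤ (P j).natDegree := fun i j =>
    (natDegree_mul_C_le _ _).trans (natDegree_taylor _ _).le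
  have htop : of (fun i j => (A i j).coeff (P j).natDegree) =
      of fun i j => (P j).leadingCoeff * (vandermonde u)ᵀ i j := by
    ext i j
    simp only [A, of_apply, coeff_mul_C, coeff_taylor_natDegree, transpose_apply,
      vandermonde_apply]
  have hcoeff : A.det.coeff (∑ j, (P j).natDegree) ≠ 0 := by
    rw [coeff_det_sum hA, htop, det_mul_row, det_transpose]
    exact mul_ne_zero (prod_ne_zero_iff.2 fun j _ => leadingCoeff_ne_zero.2 (hP j))
      (det_vandermonde_ne_zero_iff.2 hu)
  have hdet : A.det ≠ 0 := fun h => hcoeff (by rw [h, coeff_zero])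
  refine (card_le_degree_of_subset_roots fun x hx => ?_).trans (natDegree_det_le_sum hA)
  obtain ⟨v, hv, hvs⟩ := hs x hx
  rw [mem_roots hdet, IsRoot, ← coe_evalRingHom, RingHom.map_det]
  refine exists_mulVec_eq_zero_iff.1 ⟨v, hv, funext fun i => ?_⟩
  simpa [A, mulVec, dotProduct, taylor_eval] using hvs i

theorem eq_zero_of_forall_sum_eq_zero [Field F] {P : ι → F[X]} {u : ι → F} {K : ℕ}
    (hP : ∀ j, (P j).natDegree < K) (hu : Function.Injective u) {s : Finset F}
    (hcard : Fintype.card ι * K ≤ s.card)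
    (hs : ∀ x ∈ s, ∃ v : ι → F, (∀ j, v j ≠ 0) ∧
      ∀ i < Fintype.card ι, ∑ j, (P j).eval (x + i) * u j ^ i * v j = 0) :
    P = 0 := by
  classical
  by_contra hne
  obtain ⟨j₀, hj₀⟩ := Function.ne_iff.1 hne
  let I := {j // P j ≠ 0}
  let e : Fin (Fintype.card I) → ι := fun i => ((Fintype.equivFin I).symm i : ι)
  have he : Function.Injective e := Subtype.val_injective.comp (Equiv.injective _)
  have hPe : ∀ i, P (e i) ≠ 0 := fun i => ((Fintype.equivFin I).symm i).2
  have hrange : ∀ j ∉ Set.range e, P j = 0 := fun j hj => by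
    by_contra h
    exact hj ⟨Fintype.equivFin I ⟨j, h⟩, by simp [e]⟩
  have hI : 0 < Fintype.card I := Fintype.card_pos_iff.2 ⟨⟨j₀, hj₀⟩⟩
  have hIι : Fintype.card I ≤ Fintype.card ι := Fintype.card_subtype_le _
  have hle : s.card ≤ ∑ i, (P (e i)).natDegree := by
    refine card_le_sum_natDegree_of_forall_sum_eq_zero hPe (hu.comp he) fun x hx => ?_
    obtain ⟨v, hv, hvs⟩ := hs x hx
    refine ⟨v ∘ e, fun h => hv _ (congrFun h ⟨0, hI⟩), fun i => ?_⟩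
    rw [← hvs i (i.2.trans_le hIι)]
    exact Fintype.sum_of_injective e he _ _ (fun j hj => by simp [hrange j hj]) fun _ => rfl
  have hlt : ∑ i, (P (e i)).natDegree < Fintype.card I * K := by
    have := sum_lt_sum_of_nonempty (univ_nonempty_iff.2 ⟨⟨0, hI⟩⟩) fun i (_ : i ∈ univ) => hP (e i)
    simpa using this
  exact (hlt.trans_le ((Nat.mul_le_mul_right K hIι).trans (hcard.trans hle))).false

end ZeroEstimate

section BinomialPolynomial

open Polynomial Nat

/-- The binomial coefficient `z(z - 1)⋯(z - k + 1) / k!` as a polynomial in `z`. -/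
noncomputable def binomialPoly (F : Type*) [Field F] (k : ℕ) : F[X] :=
  C (k ! : F)⁻¹ * descPochhammer F k

variable {F : Type*} [Field F] [CharZero F]

lemma eval_natCast_binomialPoly (n k : ℕ) : (binomialPoly F k).eval (n : F) = n.choose k := by
  rw [binomialPoly, eval_C_mul, descPochhammer_eval_eq_descFactorial,
    descFactorial_eq_factorial_mul_choose, cast_mul,
    inv_mul_cancel_left₀ (cast_ne_zero.2 k.factorial_ne_zero)]

lemma degree_binomialPoly (k : ℕ) : (binomialPoly F k).degree = k := by
  rw [binomialPoly, degree_C_mul (inv_ne_zero (cast_ne_zero.2 k.factorial_ne_zero)),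
    degree_eq_natDegree (monic_descPochhammer F k).ne_zero, descPochhammer_natDegree]

lemma linearIndependent_binomialPoly : LinearIndependent F (binomialPoly F) :=
  Sequence.linearIndependent ⟨binomialPoly F, degree_binomialPoly⟩

lemma norm_eval_binomialPoly_le {z : ℂ} {k : ℕ} {t : ℝ} (hz : ‖z‖ + k ≤ t) :
    ‖(binomialPoly ℂ k).eval z‖ ≤ t ^ k / k ! := by
  have hfactor : ∀ j ∈ Finset.range k, ‖z - j‖ ≤ t := fun j hj => by
    have hjk : (j : ℝ) ≤ k := by exact_mod_cast (Finset.mem_range.1 hj).le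
    calc ‖z - j‖ ≤ ‖z‖ + ‖(j : ℂ)‖ := norm_sub_le _ _
      _ ≤ t := by rw [Complex.norm_natCast]; linarith
  rw [binomialPoly, eval_C_mul, descPochhammer_eval_eq_prod_range, norm_mul, norm_inv,
    Complex.norm_natCast, norm_prod, div_eq_inv_mul]
  gcongr
  simpa using Finset.prod_le_prod (fun _ _ => norm_nonneg _) hfactor

lemma pow_div_factorial_le_pow {M t : ℝ} {K k : ℕ} (hk : k ≤ K) (ht : 0 ≤ t) (hM : 3 ≤ M)
    (htM : 3 * t ≤ M * K) : t ^ k / k ! ≤ M ^ K := by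
  have hexp : Real.exp (t / (M / 3)) ≤ 3 ^ K := by
    have hle : t / (M / 3) ≤ K * 1 := by
      rw [div_le_iff₀ (by positivity)]
      linarith
    calc Real.exp (t / (M / 3)) ≤ Real.exp (K * 1) := Real.exp_le_exp.2 hle
      _ = Real.exp 1 ^ K := Real.exp_nat_mul 1 K
      _ ≤ 3 ^ K := by gcongr; exact Real.exp_one_lt_three.le
  calc t ^ k / k ! = (M / 3) ^ k * ((t / (M / 3)) ^ k / k !) := by rw [div_pow t]; field_simp
    _ ≤ (M / 3) ^ K * 3 ^ K := by
        gcongr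
        · linarith
        · exact (Real.pow_div_factorial_le_exp _ (by positivity) k).trans hexp
    _ = M ^ K := by rw [← mul_pow, div_mul_cancel₀ M three_ne_zero]

end BinomialPolynomial

section AuxiliaryFunction

open Finset Polynomial

/-- The points `M * s + r` with `r < R` and `s < S`. -/
def interpolationNodes (M R S : ℕ) : Finset ℕ :=
  (range R ×ˢ range S).image fun x => M * x.2 + x.1

/-- The approximation `binom(z, k) * X ^ (r * l) * η ^ (s * l)` to `binom(z, k) * X ^ (l * z)` at
`z = M * s + r`, where `x = (k, l)`; the two agree when `η = X ^ M`. -/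
def auxTerm {K L : ℕ} (M : ℕ) (X η : ℝ) (r s : ℕ) (x : Fin K × Fin L) : ℝ :=
  (M * s + r).choose x.1 * X ^ (r * (x.2 : ℕ)) * η ^ (s * (x.2 : ℕ))

/-- Gelfond's auxiliary function `∑ p(k, l) * binom(z, k) * X ^ (l * z)`. -/
noncomputable def auxFun {K L : ℕ} (p : Fin K × Fin L → ℤ) (X : ℝ) (z : ℂ) : ℂ :=
  ∑ x, p x * ((binomialPoly ℂ x.1).eval z * Complex.exp (x.2 * Real.log X * z))

variable {K L M R S : ℕ} {X η P : ℝ} {p : Fin K × Fin L → ℤ}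

lemma mem_interpolationNodes {a : ℕ} :
    a ∈ interpolationNodes M R S ↔ ∃ r < R, ∃ s < S, M * s + r = a := by
  simp only [interpolationNodes, mem_image, mem_product, mem_range, Prod.exists]
  exact ⟨fun ⟨r, s, ⟨hr, hs⟩, h⟩ => ⟨r, hr, s, hs, h⟩, fun ⟨r, hr, s, hs, h⟩ => ⟨r, s, ⟨hr, hs⟩, h⟩⟩

lemma card_interpolationNodes (hRM : R ≤ M) : (interpolationNodes M R S).card = R * S := by
  rw [interpolationNodes, card_image_of_injOn, card_product, card_range, card_range]
  rintro ⟨r, s⟩ hx ⟨r', s'⟩ hx' h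
  simp only [coe_product, coe_range, Set.mem_prod, Set.mem_Iio] at hx hx' h
  have hr : r < M := hx.1.trans_le hRM
  have hr' : r' < M := hx'.1.trans_le hRM
  have hmod := congrArg (· % M) h
  have hdiv := congrArg (· / M) h
  simp only [Nat.mul_add_mod, Nat.mod_eq_of_lt hr, Nat.mod_eq_of_lt hr'] at hmod
  simp only [Nat.mul_add_div (Nat.zero_lt_of_lt hr), Nat.div_eq_of_lt hr,
    Nat.div_eq_of_lt hr', add_zero] at hdiv
  rw [hmod, hdiv]

lemma mul_add_lt_mul {r s : ℕ} (hr : r < M) (hs : s < S) : M * s + r < M * S := by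
  nlinarith

lemma choose_le_pow_of_lt (hM : 3 ≤ M) (hSK : 3 * S ≤ K) {n k : ℕ} (hn : n ≤ M * S)
    (hk : k ≤ K) : (n.choose k : ℝ) ≤ M ^ K := by
  refine (Nat.choose_le_pow_div k n).trans <|
    pow_div_factorial_le_pow hk n.cast_nonneg (by exact_mod_cast hM) ?_
  have : 3 * n ≤ M * K := by nlinarith
  exact_mod_cast this

lemma IsIntegralMultiplier.pow_mul_auxTerm {ι : Type*} [Fintype ι] {b : ι → ℝ} {A G : ℝ} {q : ℕ}
    (hX : IsIntegralMultiplier b A X) (hη : IsIntegralMultiplier b G (q * η)) (hA : 1 ≤ A)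
    (hG : 1 ≤ G) (hqG : q ≤ G) (hM : 3 ≤ M) (hSK : 3 * S ≤ K) (hRM : R ≤ M) {r s : ℕ}
    (hr : r < R) (hs : s < S) (x : Fin K × Fin L) :
    IsIntegralMultiplier b (M ^ K * A ^ (R * L) * G ^ (S * L))
      ((q : ℝ) ^ (s * L) * auxTerm M X η r s x) := by
  classical
  obtain ⟨k, l⟩ := x
  have hchoose : ((M * s + r).choose k : ℝ) ≤ M ^ K :=
    choose_le_pow_of_lt hM hSK (mul_add_lt_mul (hr.trans_le hRM) hs).le k.2.le
  have hsplit : s * L = s * (L - l) + s * l := by rw [← mul_add, Nat.sub_add_cancel l.2.le]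
  have hterm := (((natCast (b := b) ((M * s + r).choose k)).mul (hX.pow (r * l))).mul
    ((natCast (b := b) q).pow (s * (L - l)))).mul (hη.pow (s * l))
  convert hterm.mono (B' := M ^ K * A ^ (R * L) * G ^ (S * L)) ?_ using 1
  · rw [auxTerm, hsplit, pow_add, mul_pow]
    ring
  · have hAle : A ^ (r * l : ℕ) ≤ A ^ (R * L) :=
      pow_le_pow_right₀ hA (Nat.mul_le_mul hr.le l.2.le)
    have hGle : (q : ℝ) ^ (s * (L - l)) * G ^ (s * l : ℕ) ≤ G ^ (S * L) := by
      calc (q : ℝ) ^ (s * (L - l)) * G ^ (s * l : ℕ)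
          ≤ G ^ (s * (L - l)) * G ^ (s * l : ℕ) := by gcongr
        _ = G ^ (s * L) := by rw [hsplit, pow_add]
        _ ≤ G ^ (S * L) := pow_le_pow_right₀ hG (Nat.mul_le_mul_right L hs.le)
    rw [mul_assoc _ (_ ^ _) (_ ^ _)]
    gcongr

lemma differentiable_auxFun : Differentiable ℂ (auxFun p X) := by
  unfold auxFun
  fun_prop

lemma norm_sum_intCast_mul_le {𝕜 σ : Type*} [RCLike 𝕜] [Fintype σ] {c : σ → ℤ} {w : σ → 𝕜}
    {B : ℝ} (hc : ∀ x, |(c x : ℝ)| ≤ P) (hw : ∀ x, ‖w x‖ ≤ B) :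
    ‖∑ x, (c x : 𝕜) * w x‖ ≤ (univ : Finset σ).card * (P * B) := by
  rw [← nsmul_eq_mul, ← sum_const]
  refine norm_sum_le_of_le univ fun x _ => ?_
  have hcx : ‖(c x : 𝕜)‖ ≤ P := by
    rw [← RCLike.ofReal_intCast, RCLike.norm_ofReal]
    exact hc x
  calc ‖(c x : 𝕜) * w x‖ = ‖(c x : 𝕜)‖ * ‖w x‖ := norm_mul _ _
    _ ≤ P * B := mul_le_mul hcx (hw x) (norm_nonneg _) ((norm_nonneg _).trans hcx)

lemma norm_auxFun_le (hp : ∀ x, |(p x : ℝ)| ≤ P) {B : ℝ} {z : ℂ}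
    (hB : ∀ k < K, ‖(binomialPoly ℂ k).eval z‖ ≤ B) :
    ‖auxFun p X z‖ ≤ K * L * (P * (B * Real.exp (L * |Real.log X| * ‖z‖))) := by
  refine (norm_sum_intCast_mul_le hp (B := B * Real.exp (L * |Real.log X| * ‖z‖))
    fun x => ?_).trans_eq (by simp)
  obtain ⟨k, l⟩ := x
  have hl : (l : ℝ) ≤ L := by exact_mod_cast l.2.le
  have hexp : ‖Complex.exp (l * Real.log X * z)‖ ≤ Real.exp (L * |Real.log X| * ‖z‖) := by
    refine (Complex.norm_exp_le_exp_norm _).trans (Real.exp_le_exp.2 ?_)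
    rw [norm_mul, norm_mul, Complex.norm_natCast, Complex.norm_real, Real.norm_eq_abs]
    gcongr
  rw [norm_mul]
  exact mul_le_mul (hB k k.2) hexp (norm_nonneg _) ((norm_nonneg _).trans (hB k k.2))

lemma norm_auxFun_le_of_norm_eq {T : ℝ} (hM : 3 ≤ M) (hSK : 66 * S ≤ K) (hKM : K ≤ M * S)
    (hTX : M * |Real.log X| ≤ T) (hP : 0 ≤ P) (hp : ∀ x, |(p x : ℝ)| ≤ P) {z : ℂ}
    (hz : ‖z‖ = (20 + 1) * (M * S)) :
    ‖auxFun p X z‖ ≤ K * L * (P * (M ^ K * Real.exp (21 * T * L * S))) := by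
  refine (norm_auxFun_le hp (B := M ^ K) fun k hk => ?_).trans ?_
  · refine (norm_eval_binomialPoly_le le_rfl).trans <|
      pow_div_factorial_le_pow hk.le (by positivity) (by exact_mod_cast hM) ?_
    have hkMS : (k : ℝ) ≤ M * S := by exact_mod_cast hk.le.trans hKM
    have hMSK : (M : ℝ) * (66 * S) ≤ M * K := by gcongr; exact_mod_cast hSK
    linarith
  · have hexponent : L * |Real.log X| * ‖z‖ ≤ 21 * T * L * S := by
      rw [hz]
      linear_combination (21 * L * S : ℝ) * hTX
    gcongr

lemma abs_exp_sub_exp_le {u v c : ℝ} (hu : u ≤ c) (hv : v ≤ c) :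
    |Real.exp u - Real.exp v| ≤ |u - v| * Real.exp c := by
  wlog huv : v ≤ u generalizing u v
  · rw [abs_sub_comm, abs_sub_comm u]
    exact this hv hu (le_of_not_ge huv)
  rw [abs_of_nonneg (sub_nonneg.2 (Real.exp_le_exp.2 huv)), abs_of_nonneg (sub_nonneg.2 huv)]
  have hsub : 1 - Real.exp (v - u) ≤ u - v := by linarith [Real.add_one_le_exp (v - u)]
  calc Real.exp u - Real.exp v = Real.exp u * (1 - Real.exp (v - u)) := by
        rw [Real.exp_sub]; field_simp
    _ ≤ Real.exp u * (u - v) := by gcongr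
    _ ≤ Real.exp c * (u - v) := by gcongr
    _ = (u - v) * Real.exp c := mul_comm _ _

lemma abs_exp_sub_auxTerm_le {T : ℝ} (hX : 0 < X) (hη : 0 < η) (hM : 3 ≤ M) (hSK : 3 * S ≤ K)
    (hTX : M * |Real.log X| ≤ T) (hTη : |Real.log η| ≤ T) {r s : ℕ} (hr : r < M) (hs : s < S)
    (x : Fin K × Fin L) :
    |(M * s + r).choose x.1 * Real.exp (x.2 * Real.log X * (M * s + r : ℕ)) -
        auxTerm M X η r s x| ≤
      M ^ K * (S * L * |Real.log η - M * Real.log X| * Real.exp (2 * T * L * S)) := by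
  obtain ⟨k, l⟩ := x
  have hT : 0 ≤ T := (abs_nonneg _).trans hTη
  have hl : (l : ℝ) ≤ L := by exact_mod_cast l.2.le
  have hs' : (s : ℝ) ≤ S := by exact_mod_cast hs.le
  have hS1 : (1 : ℝ) ≤ S := by exact_mod_cast Nat.one_le_of_lt hs
  have hrX : r * Real.log X ≤ T :=
    calc r * Real.log X ≤ r * |Real.log X| := by gcongr; exact le_abs_self _
      _ ≤ M * |Real.log X| := by gcongr
      _ ≤ T := hTX
  have hexponent : ∀ t ≤ T, r * l * Real.log X + s * l * t ≤ 2 * T * L * S := fun t ht =>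
    calc r * l * Real.log X + s * l * t = l * (r * Real.log X) + s * l * t := by ring
      _ ≤ l * T + s * l * T := by gcongr
      _ ≤ L * T + S * L * T := by gcongr
      _ ≤ L * T * S + S * L * T :=
        add_le_add_left (le_mul_of_one_le_right (by positivity) hS1) _
      _ = 2 * T * L * S := by ring
  have hMX : M * Real.log X ≤ T :=
    (mul_le_mul_of_nonneg_left (le_abs_self _) M.cast_nonneg).trans hTX
  have hterm : auxTerm M X η r s (k, l) =
      (M * s + r).choose k * Real.exp (r * l * Real.log X + s * l * Real.log η) := by
    rw [auxTerm, Real.exp_add, mul_assoc, ← Nat.cast_mul, ← Nat.cast_mul, Real.exp_nat_mul,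
      Real.exp_nat_mul, Real.exp_log hX, Real.exp_log hη]
  have hnode : (l : ℝ) * Real.log X * (M * s + r : ℕ) =
      r * l * Real.log X + s * l * (M * Real.log X) := by
    push_cast
    ring
  rw [hterm, hnode, ← mul_sub, abs_mul, Nat.abs_cast]
  gcongr
  · exact choose_le_pow_of_lt hM hSK (mul_add_lt_mul hr hs).le k.2.le
  · refine (abs_exp_sub_exp_le (hexponent _ hMX)
      (hexponent _ ((le_abs_self _).trans hTη))).trans ?_
    rw [add_sub_add_left_eq_sub, ← mul_sub, abs_mul, abs_sub_comm, abs_of_nonneg (by positivity)]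
    gcongr

lemma norm_auxFun_sub_le {T : ℝ} (hX : 0 < X) (hη : 0 < η) (hM : 3 ≤ M) (hSK : 3 * S ≤ K)
    (hTX : M * |Real.log X| ≤ T) (hTη : |Real.log η| ≤ T) (hp : ∀ x, |(p x : ℝ)| ≤ P) {r s : ℕ}
    (hr : r < M) (hs : s < S) :
    ‖auxFun p X (M * s + r : ℕ) - (∑ x, p x * auxTerm M X η r s x : ℝ)‖ ≤
      K * L * (P * (M ^ K *
        (S * L * |Real.log η - M * Real.log X| * Real.exp (2 * T * L * S)))) := by
  have hval : auxFun p X (M * s + r : ℕ) = ((∑ x, p x * ((M * s + r).choose x.1 *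
      Real.exp (x.2 * Real.log X * (M * s + r : ℕ))) : ℝ) : ℂ) := by
    simp only [auxFun, eval_natCast_binomialPoly]
    push_cast
    rfl
  rw [hval, ← Complex.ofReal_sub, Complex.norm_real, ← sum_sub_distrib]
  simp only [← mul_sub]
  refine (norm_sum_intCast_mul_le hp (B := M ^ K * (S * L * |Real.log η - M * Real.log X| *
    Real.exp (2 * T * L * S))) fun x => ?_).trans_eq (by simp)
  exact abs_exp_sub_auxTerm_le hX hη hM hSK hTX hTη hr hs x

theorem abs_sum_auxTerm_le {T : ℝ} (hX : 0 < X) (hη : 0 < η) (hRM : R ≤ M) (hR : 132 ≤ R)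
    (hSK : 66 * S ≤ K) (hKM : K ≤ M * S) (hTX : M * |Real.log X| ≤ T) (hTη : |Real.log η| ≤ T)
    (hP : 0 ≤ P) (hp : ∀ x, |(p x : ℝ)| ≤ P)
    (hzero : ∀ r < R, ∀ s < S, ∑ x, p x * auxTerm M X η r s x = 0)
    {r s : ℕ} (hr : r < M) (hs : s < S) :
    |∑ x, p x * auxTerm M X η r s x| ≤
      K * L * (P * M ^ K) * (Real.exp (21 * T * L * S) / 20 ^ (R * S) +
        (2 * (R * S) * M ^ (R * S) + 1) *
          (S * L * |Real.log η - M * Real.log X| * Real.exp (2 * T * L * S))) := by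
  set ε := K * L * (P * (M ^ K *
    (S * L * |Real.log η - M * Real.log X| * Real.exp (2 * T * L * S))))
  have hM : 3 ≤ M := by omega
  have hM' : (3 : ℝ) ≤ M := by exact_mod_cast hM
  have hS : 0 < S := Nat.zero_lt_of_lt hs
  have hclose : ∀ {r s : ℕ}, r < M → s < S →
      ‖auxFun p X (M * s + r : ℕ) - (∑ x, p x * auxTerm M X η r s x : ℝ)‖ ≤ ε :=
    fun hr hs => norm_auxFun_sub_le hX hη hM (by omega) hTX hTη hp hr hs
  have hε0 : 0 ≤ ε := (norm_nonneg _).trans (hclose hr hs)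
  have hsmall : ∀ a ∈ interpolationNodes M R S, ‖auxFun p X a‖ ≤ ε := fun a ha => by
    obtain ⟨r, hr, s, hs, rfl⟩ := mem_interpolationNodes.1 ha
    simpa [hzero r hr s hs] using hclose (hr.trans_le hRM) hs
  have hnode : ∀ {r s : ℕ}, r < M → s < S → ((M * s + r : ℕ) : ℝ) ≤ M * S := fun hr hs => by
    exact_mod_cast (mul_add_lt_mul hr hs).le
  have hinterp := norm_natCast_le_of_forall_mem_norm_le differentiable_auxFun
    (by positivity) (by norm_num : (1 : ℝ) ≤ 20) hε0
    (fun a ha => by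
      obtain ⟨r, hr, s, hs, rfl⟩ := mem_interpolationNodes.1 ha
      exact hnode (hr.trans_le hRM) hs)
    (fun z hz => norm_auxFun_le_of_norm_eq hM hSK hKM hTX hP hp
      (mem_sphere_zero_iff_norm.1 hz))
    hsmall (hnode hr hs)
  rw [card_interpolationNodes hRM] at hinterp
  have hfact : (2 * ((20 + 2) * (M * S : ℝ))) ^ (R * S - 1) / (R * S - 1).factorial ≤
      M ^ (R * S) := by
    refine pow_div_factorial_le_pow (Nat.sub_le _ _) (by positivity) hM' ?_
    have hMSR : (M : ℝ) * S * 132 ≤ M * S * R := by gcongr; exact_mod_cast hR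
    push_cast
    linarith
  have hle : 2 * ((R * S : ℕ) * (ε * ((2 * ((20 + 2) * (M * S : ℝ))) ^ (R * S - 1) /
      (R * S - 1).factorial))) ≤ 2 * ((R * S : ℕ) * (ε * M ^ (R * S))) := by gcongr
  have hclose' := hclose hr hs
  have htri := norm_sub_le (auxFun p X (M * s + r : ℕ))
    (auxFun p X (M * s + r : ℕ) - (∑ x, p x * auxTerm M X η r s x : ℝ))
  rw [sub_sub_cancel, Complex.norm_real, Real.norm_eq_abs] at htri
  push_cast at hle hinterp htri hclose'
  linear_combination htri + hclose' + hinterp + hle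

lemma eq_zero_of_forall_sum_auxTerm_eq_zero (hX : 0 < X) (hX1 : X ≠ 1) (hη : η ≠ 0) (hRM : R ≤ M)
    (hLK : L * K ≤ R * S)
    (hzero : ∀ r < R + L, ∀ s < S, ∑ x, p x * auxTerm M X η r s x = 0) : p = 0 := by
  rcases K.eq_zero_or_pos with rfl | hK
  · exact Subsingleton.elim _ _
  let Q : Fin L → ℝ[X] := fun l => ∑ k : Fin K, (p (k, l) : ℝ) • binomialPoly ℝ k
  have hdeg : ∀ l, (Q l).natDegree < K := fun l => by
    refine (natDegree_sum_le_of_forall_le _ (n := K - 1) _ fun k _ => ?_).trans_lt (by omega)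
    refine (natDegree_smul_le _ _).trans ?_
    rw [natDegree_eq_of_degree_eq_some (degree_binomialPoly (F := ℝ) k)]
    omega
  have hinj : Function.Injective fun l : Fin L => X ^ (l : ℕ) :=
    (pow_right_injective₀ hX hX1).comp Fin.val_injective
  have hQ : Q = 0 := by
    refine eq_zero_of_forall_sum_eq_zero hdeg hinj
      (s := (interpolationNodes M R S).map Nat.castEmbedding) ?_ fun z hz => ?_
    · rwa [card_map, card_interpolationNodes hRM, Fintype.card_fin]
    obtain ⟨a, ha, rfl⟩ := mem_map.1 hz
    obtain ⟨r, hr, s, hs, rfl⟩ := mem_interpolationNodes.1 ha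
    refine ⟨fun l => X ^ (r * (l : ℕ)) * η ^ (s * (l : ℕ)),
      fun l => mul_ne_zero (pow_ne_zero _ hX.ne') (pow_ne_zero _ hη), fun i hi => ?_⟩
    rw [Fintype.card_fin] at hi
    rw [← hzero (r + i) (by omega) s hs, Fintype.sum_prod_type_right]
    refine sum_congr rfl fun l _ => ?_
    rw [Nat.castEmbedding_apply, ← Nat.cast_add, eval_finsetSum, sum_mul, sum_mul]
    refine sum_congr rfl fun k _ => ?_
    rw [eval_smul, eval_natCast_binomialPoly, auxTerm, add_assoc, smul_eq_mul]
    ring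
  funext ⟨k, l⟩
  have hli := (linearIndependent_binomialPoly (F := ℝ)).comp ((↑) : Fin K → ℕ) Fin.val_injective
  exact_mod_cast Fintype.linearIndependent_iff.1 hli (fun k => p (k, l)) (congrFun hQ l) k

section Arithmetic

variable {ι : Type*} [Fintype ι] [Nonempty ι] {b : ι → ℝ} {q : ℕ} {A G : ℝ}

lemma sum_mul_pow_mul_auxTerm (r s : ℕ) :
    ∑ x, p x * ((q : ℝ) ^ (s * L) * auxTerm M X η r s x) =
      (q : ℝ) ^ (s * L) * ∑ x, p x * auxTerm M X η r s x := by
  rw [mul_sum]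
  exact sum_congr rfl fun x _ => mul_left_comm _ _ _

lemma one_le_pow_mul_pow_mul_pow (hM : 1 ≤ M) (hA : 1 ≤ A) (hG : 1 ≤ G) (N : ℕ) :
    1 ≤ (M : ℝ) ^ K * A ^ (N * L) * G ^ (S * L) := by
  have hM1 : (1 : ℝ) ≤ M := by exact_mod_cast hM
  exact one_le_mul_of_one_le_of_one_le
    (one_le_mul_of_one_le_of_one_le (one_le_pow₀ hM1) (one_le_pow₀ hA)) (one_le_pow₀ hG)

lemma exists_forall_sum_auxTerm_eq_zero (hb : LinearIndependent ℤ b) (hq : 0 < q)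
    (hXb : IsIntegralMultiplier b A X) (hηb : IsIntegralMultiplier b G (q * η)) (hA : 1 ≤ A)
    (hG : 1 ≤ G) (hqG : q ≤ G) (hM : 3 ≤ M) (hSK : 3 * S ≤ K) (hRM : R ≤ M) (hR : 0 < R)
    (hS : 0 < S) (hKL : K * L = 2 * (Fintype.card ι * (R * S))) :
    ∃ p : Fin K × Fin L → ℤ, p ≠ 0 ∧
      (∀ x, |(p x : ℝ)| ≤ K * L * (M ^ K * A ^ (R * L) * G ^ (S * L))) ∧
      ∀ r < R, ∀ s < S, ∑ x, p x * auxTerm M X η r s x = 0 := by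
  have : NeZero R := ⟨hR.ne'⟩
  have : NeZero S := ⟨hS.ne'⟩
  obtain ⟨p, hp0, hpB, hp⟩ := IsIntegralMultiplier.exists_sum_eq_zero hb
    (σ := Fin K × Fin L) (ρ := Fin R × Fin S) (by simpa using hKL)
    (one_le_pow_mul_pow_mul_pow (by omega) hA hG R)
    fun i x => hXb.pow_mul_auxTerm hηb hA hG hqG hM hSK hRM i.1.2 i.2.2 x
  refine ⟨p, hp0, by simpa using hpB, fun r hr s hs => ?_⟩
  exact (mul_eq_zero.1 ((sum_mul_pow_mul_auxTerm r s).symm.trans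
    (hp (⟨r, hr⟩, ⟨s, hs⟩)))).resolve_left (by positivity)

lemma one_le_abs_sum_auxTerm_mul (hb : LinearIndependent ℤ b) (hq : 0 < q)
    (hXb : IsIntegralMultiplier b A X) (hηb : IsIntegralMultiplier b G (q * η)) (hA : 1 ≤ A)
    (hG : 1 ≤ G) (hqG : q ≤ G) (hM : 3 ≤ M) (hSK : 3 * S ≤ K) (hRM : R ≤ M)
    (hp : ∀ x, |(p x : ℝ)| ≤ P) {r s : ℕ} (hr : r < R) (hs : s < S)
    (hne : ∑ x, p x * auxTerm M X η r s x ≠ 0) :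
    1 ≤ G ^ (S * L) * |∑ x, p x * auxTerm M X η r s x| *
      (K * L * (P * (M ^ K * A ^ (R * L) * G ^ (S * L)))) ^ (Fintype.card ι - 1) := by
  have hW := one_le_pow_mul_pow_mul_pow (M := M) (K := K) (L := L) (S := S) (by omega) hA hG R
  obtain ⟨x₀, -, -⟩ := exists_ne_zero_of_sum_ne_zero hne
  have hP : 0 ≤ P := (abs_nonneg _).trans (hp x₀)
  have hmult := IsIntegralMultiplier.sum_intCast_mul univ (fun x _ => hp x)
    (zero_le_one.trans hW) fun x _ => hXb.pow_mul_auxTerm hηb hA hG hqG hM hSK hRM hr hs x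
  rw [sum_mul_pow_mul_auxTerm] at hmult
  refine (hmult.one_le_abs_mul_pow hb (by positivity)).trans ?_
  rw [abs_mul, abs_of_nonneg (by positivity), card_univ, Fintype.card_prod, Fintype.card_fin,
    Fintype.card_fin, Nat.cast_mul]
  gcongr ?_ * _ * _
  calc (q : ℝ) ^ (s * L) ≤ G ^ (s * L) := by gcongr
    _ ≤ G ^ (S * L) := pow_le_pow_right₀ hG (Nat.mul_le_mul_right L hs.le)

/-- Gelfond's method: if `log η` were too close to `M * log X`, an auxiliary function with many
zeros would have so many more, by Liouville's inequality, that it had to vanish identically. -/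
theorem one_le_of_gelfond (hb : LinearIndependent ℤ b) {T : ℝ} (hX : 0 < X) (hX1 : X ≠ 1)
    (hη : 0 < η) (hq : 0 < q) (hXb : IsIntegralMultiplier b A X)
    (hηb : IsIntegralMultiplier b G (q * η)) (hA : 1 ≤ A) (hqG : q ≤ G)
    (hTX : M * |Real.log X| ≤ T) (hTη : |Real.log η| ≤ T)
    (hKL : K * L = 2 * (Fintype.card ι * (R * S))) (hS : 0 < S) (hSK : 66 * S ≤ K)
    (hKM : K ≤ M * S) (hR : 132 ≤ R) (hLR : L ≤ R) (hRM : (2 * Fintype.card ι + 1) * R ≤ M) :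
    1 ≤ (K * L) ^ (2 * Fintype.card ι) * (M ^ K * A ^ (R * L) * G ^ (S * L)) ^ Fintype.card ι *
      (M ^ K * A ^ ((2 * Fintype.card ι + 1) * R * L) * G ^ (S * L)) ^ (Fintype.card ι - 1) *
      (M ^ K * G ^ (S * L)) * (Real.exp (21 * T * L * S) / 20 ^ (R * S) +
        (2 * (R * S) * M ^ (R * S) + 1) *
          (S * L * |Real.log η - M * Real.log X| * Real.exp (2 * T * L * S))) := by
  have hRM' : R ≤ M := (Nat.le_mul_of_pos_left R (by omega)).trans hRM
  have hG : 1 ≤ G := (by exact_mod_cast hq : (1 : ℝ) ≤ q).trans hqG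
  have hM : 3 ≤ M := by omega
  obtain ⟨p, hp0, hpB, hp⟩ := exists_forall_sum_auxTerm_eq_zero hb hq hXb hηb hA hG hqG hM
    (by omega) hRM' (by omega) hS hKL
  obtain ⟨r, hr, s, hs, hne⟩ : ∃ r < (2 * Fintype.card ι + 1) * R, ∃ s < S,
      ∑ x, p x * auxTerm M X η r s x ≠ 0 := by
    by_contra! h
    exact hp0 (eq_zero_of_forall_sum_auxTerm_eq_zero hX hX1 hη.ne'
      (R := 2 * Fintype.card ι * R) (by nlinarith) (by nlinarith) fun r hr => h r (by nlinarith))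
  have hliouville := one_le_abs_sum_auxTerm_mul hb hq hXb hηb hA hG hqG hM (by omega) hRM hpB
    hr hs hne
  have hP : 0 ≤ K * L * (M ^ K * A ^ (R * L) * G ^ (S * L)) := by positivity
  have hupper := abs_sum_auxTerm_le hX hη hRM' hR hSK hKM hTX hTη hP hpB hp (hr.trans_le hRM) hs
  obtain ⟨d, hd⟩ := Nat.exists_eq_add_one_of_ne_zero (Fintype.card_ne_zero (α := ι))
  refine (hliouville.trans <| mul_le_mul_of_nonneg_right
    (mul_le_mul_of_nonneg_left hupper (by positivity)) (by positivity)).trans_eq ?_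
  rw [hd, Nat.add_sub_cancel]
  ring

end Arithmetic

end AuxiliaryFunction

section Numerics

open Real

lemma pow_le_exp_mul {a s : ℝ} (ha : 0 ≤ a) (has : a ≤ exp s) (n : ℕ) : a ^ n ≤ exp (n * s) :=
  (pow_le_pow_left₀ ha has n).trans_eq (exp_nat_mul s n).symm

lemma twelve_mul_le_exp {H : ℝ} (hH : 1 ≤ H) : 12 * 10 ^ 14 * H ≤ exp (36 * H) := by
  have h12 : (12 : ℝ) * 10 ^ 14 ≤ exp 1 ^ 35 := by
    refine le_trans ?_ (pow_le_pow_left₀ (by norm_num) exp_one_gt_d9.le 35)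
    norm_num
  calc 12 * 10 ^ 14 * H ≤ exp 1 ^ 35 * exp H := by
        gcongr
        linarith [add_one_le_exp H]
    _ = exp (35 + H) := by rw [← exp_nat_mul, ← exp_add]; norm_num
    _ ≤ exp (36 * H) := exp_le_exp.2 (by linarith)

lemma exp_mul_le_twenty_pow (n : ℕ) : exp (n * 2.75) ≤ 20 ^ n := by
  have h20 : exp 2.75 ≤ 20 := by
    have h : exp 2.75 ^ 4 ≤ 20 ^ 4 := by
      rw [← exp_nat_mul, show ((4 : ℕ) : ℝ) * 2.75 = (11 : ℕ) * 1 by norm_num, exp_nat_mul]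
      refine (pow_le_pow_left₀ (exp_pos 1).le exp_one_lt_d9.le 11).trans ?_
      norm_num
    exact (pow_le_pow_iff_left₀ (exp_pos _).le (by norm_num) (by norm_num)).1 h
  rw [exp_nat_mul]
  exact pow_le_pow_left₀ (exp_pos _).le h20 n

variable {K L R S M : ℕ} {H δ : ℝ}

/-- In units of `10 ^ 14 * H` the exponents add up to less than `2.08`; the competing gain is
`log 20 > 2.75`. -/
lemma gelfond_prefactor_le (hH : 1 ≤ H) (hK : K = 12 * 10 ^ 10 * H) (hL : (L : ℝ) = 10 ^ 4)
    (hR : (R : ℝ) = 10 ^ 8) (hS : S = 10 ^ 6 * H) (hM : M ≤ exp 39) :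
    (K * L) ^ 12 * (M ^ K * exp (2 * H) ^ (R * L) * exp 77 ^ (S * L)) ^ 6 *
      (M ^ K * exp (2 * H) ^ (13 * R * L) * exp 77 ^ (S * L)) ^ 5 * (M ^ K * exp 77 ^ (S * L)) ≤
      exp (2.08 * 10 ^ 14 * H) := by
  have hKL : (K * L : ℝ) ≤ exp (36 * H) := by
    refine le_of_eq_of_le ?_ (twelve_mul_le_exp hH)
    rw [hK, hL]
    ring
  have hMK := pow_le_exp_mul M.cast_nonneg hM K
  calc _ ≤ exp (36 * H) ^ 12 * (exp (K * 39) * exp (2 * H) ^ (R * L) * exp 77 ^ (S * L)) ^ 6 *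
        (exp (K * 39) * exp (2 * H) ^ (13 * R * L) * exp 77 ^ (S * L)) ^ 5 *
        (exp (K * 39) * exp 77 ^ (S * L)) := by gcongr
    _ ≤ exp (2.08 * 10 ^ 14 * H) := by
      simp only [← exp_nat_mul, ← exp_add]
      rw [exp_le_exp]
      push_cast
      rw [hK, hL, hR, hS]
      linarith

lemma gelfond_error_le (hH : 1 ≤ H) (hL : (L : ℝ) = 10 ^ 4) (hR : (R : ℝ) = 10 ^ 8)
    (hS : S = 10 ^ 6 * H) (hM1 : 1 ≤ M) (hM : M ≤ exp 39) (hδ : |δ| ≤ exp (-(5 * 10 ^ 15 * H))) :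
    exp (21 * 30 * L * S) / 20 ^ (R * S) +
      (2 * (R * S) * M ^ (R * S) + 1) * (S * L * |δ| * exp (2 * 30 * L * S)) ≤
      2 * exp (-(2.6 * 10 ^ 14 * H)) := by
  have hgrowth : exp (21 * 30 * L * S) / 20 ^ (R * S) ≤ exp (-(2.6 * 10 ^ 14 * H)) := by
    rw [div_le_iff₀ (by positivity)]
    refine le_trans ?_ (mul_le_mul_of_nonneg_left (exp_mul_le_twenty_pow _) (exp_pos _).le)
    rw [← exp_add, exp_le_exp]
    push_cast
    rw [hL, hR, hS]
    linarith
  have hMRS : 2 * (R * S) * M ^ (R * S) + 1 ≤ exp (36 * H) * exp ((R * S : ℕ) * 39) := by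
    have hpow : (1 : ℝ) ≤ M ^ (R * S) := one_le_pow₀ (by exact_mod_cast hM1)
    calc 2 * (R * S) * (M : ℝ) ^ (R * S) + 1 ≤ (2 * (R * S) + 1) * M ^ (R * S) := by linarith
      _ ≤ exp (36 * H) * exp ((R * S : ℕ) * 39) := by
        gcongr
        · refine le_trans ?_ (twelve_mul_le_exp hH)
          rw [hR, hS]
          linarith
        · exact pow_le_exp_mul M.cast_nonneg hM _
  have hSL : S * L ≤ exp (36 * H) := by
    refine le_trans ?_ (twelve_mul_le_exp hH)
    rw [hL, hS]
    linarith
  have hdelta : (2 * (R * S) * M ^ (R * S) + 1) * (S * L * |δ| * exp (2 * 30 * L * S)) ≤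
      exp (-(2.6 * 10 ^ 14 * H)) := by
    calc _ ≤ exp (36 * H) * exp ((R * S : ℕ) * 39) *
          (exp (36 * H) * exp (-(5 * 10 ^ 15 * H)) * exp (2 * 30 * L * S)) := by gcongr
      _ ≤ exp (-(2.6 * 10 ^ 14 * H)) := by
        simp only [← exp_add]
        rw [exp_le_exp]
        push_cast
        rw [hL, hR, hS]
        linarith
  linarith

theorem exp_neg_lt_abs_log_sub {ι : Type*} [Fintype ι] {b : ι → ℝ} (hb : LinearIndependent ℤ b)
    (hι : Fintype.card ι = 6) {H q : ℕ} {X η : ℝ} (hH : 1 ≤ H) (hX : 0 < X) (hX1 : X ≠ 1)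
    (hη : 0 < η) (hq : 0 < q) (hXb : IsIntegralMultiplier b (exp (2 * H)) X)
    (hηb : IsIntegralMultiplier b (exp 77) (q * η)) (hqG : q ≤ exp 77)
    (hTX : M * |log X| ≤ 30) (hTη : |log η| ≤ 30) (hM1 : 13 * 10 ^ 8 ≤ M) (hM2 : M ≤ exp 39) :
    exp (-(5 * 10 ^ 15 * H)) < |log η - M * log X| := by
  by_contra! hδ
  have : Nonempty ι := Fintype.card_pos_iff.1 (by omega)
  have hH' : (1 : ℝ) ≤ H := by exact_mod_cast hH
  obtain ⟨K, hK⟩ : ∃ K, K = 12 * 10 ^ 10 * H := ⟨_, rfl⟩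
  obtain ⟨L, hL⟩ : ∃ L, L = 10 ^ 4 := ⟨_, rfl⟩
  obtain ⟨R, hR⟩ : ∃ R, R = 10 ^ 8 := ⟨_, rfl⟩
  obtain ⟨S, hS⟩ : ∃ S, S = 10 ^ 6 * H := ⟨_, rfl⟩
  have hlower := one_le_of_gelfond (K := K) (L := L) (R := R) (S := S) hb hX hX1 hη hq hXb hηb
    (one_le_exp (by positivity)) hqG hTX hTη (by rw [hι, hK, hL, hR, hS]; ring) (by omega)
    (by omega) (by rw [hK, hS]; nlinarith) (by omega) (by omega) (by rw [hι, hR]; omega)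
  have hprefactor := gelfond_prefactor_le (K := K) (L := L) (R := R) (S := S) hH'
    (by exact_mod_cast hK) (by exact_mod_cast hL) (by exact_mod_cast hR) (by exact_mod_cast hS) hM2
  have herror := gelfond_error_le (L := L) (R := R) (S := S) hH'
    (by exact_mod_cast hL) (by exact_mod_cast hR) (by exact_mod_cast hS) (by omega) hM2 hδ
  rw [hι] at hlower
  refine hlower.not_gt ((mul_le_mul hprefactor herror (by positivity) (exp_pos _).le).trans_lt ?_)
  have h2 : (2 : ℝ) ≤ exp 1 := by linarith [add_one_le_exp (1 : ℝ)]
  calc exp (2.08 * 10 ^ 14 * H) * (2 * exp (-(2.6 * 10 ^ 14 * H)))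
      ≤ exp (2.08 * 10 ^ 14 * H) * (exp 1 * exp (-(2.6 * 10 ^ 14 * H))) := by gcongr
    _ = exp (2.08 * 10 ^ 14 * H + (1 + -(2.6 * 10 ^ 14 * H))) := by rw [← exp_add, ← exp_add]
    _ < 1 := exp_lt_one_iff.2 (by linarith)

end Numerics

section TribonacciRoot

open Polynomial

lemma exists_tribRoot : ∃ t : ℝ, t ^ 3 = t ^ 2 + t + 1 ∧ 1.83 < t ∧ t < 1.84 := by
  have hcont : ContinuousOn (fun t : ℝ => t ^ 3 - t ^ 2 - t - 1) (Set.Icc 1.83 1.84) := by fun_prop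
  obtain ⟨t, ht, ht0⟩ := intermediate_value_Ioo (by norm_num) hcont
    (show (0 : ℝ) ∈ _ by constructor <;> norm_num)
  exact ⟨t, by linear_combination ht0, ht⟩

/-- The dominant root of the Tribonacci polynomial `X ^ 3 - X ^ 2 - X - 1`. -/
noncomputable def tribRoot : ℝ := exists_tribRoot.choose

local notation "α" => tribRoot

lemma tribRoot_pow_three : α ^ 3 = α ^ 2 + α + 1 := exists_tribRoot.choose_spec.1

lemma lt_tribRoot : 1.83 < α := exists_tribRoot.choose_spec.2.1

lemma tribRoot_lt : α < 1.84 := exists_tribRoot.choose_spec.2.2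

lemma one_lt_tribRoot : 1 < α := by linarith [lt_tribRoot]

lemma tribRoot_pos : 0 < α := one_pos.trans one_lt_tribRoot

lemma inv_tribRoot : α⁻¹ = α ^ 2 - α - 1 :=
  inv_eq_of_mul_eq_one_right (by linear_combination tribRoot_pow_three)

lemma irreducible_tribPoly : Irreducible (X ^ 3 - X ^ 2 - X - 1 : ℚ[X]) := by
  refine irreducible_of_degree_le_three_of_not_isRoot ?_ fun r hr => ?_
  · rw [show (X ^ 3 - X ^ 2 - X - 1 : ℚ[X]).natDegree = 3 by compute_degree!]
    decide
  have hmonic : (X ^ 3 - X ^ 2 - X - 1 : ℤ[X]).Monic := by monicity!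
  obtain ⟨n, rfl, -⟩ := exists_integer_of_is_root_of_monic hmonic
    (r := r) (by simpa [IsRoot.def] using hr)
  have hn : n * (n ^ 2 - n - 1) = 1 := by
    have : (n : ℚ) ^ 3 - n ^ 2 - n - 1 = 0 := by simpa [IsRoot.def] using hr
    have : n ^ 3 - n ^ 2 - n - 1 = 0 := by exact_mod_cast this
    linear_combination this
  obtain rfl | rfl := Int.eq_one_or_neg_one_of_mul_eq_one hn <;> norm_num at hn

lemma minpoly_tribRoot : minpoly ℚ α = X ^ 3 - X ^ 2 - X - 1 := by
  refine (minpoly.eq_of_irreducible_of_monic irreducible_tribPoly ?_ (by monicity!)).symm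
  simp only [map_sub, map_pow, aeval_X, map_one]
  linear_combination tribRoot_pow_three

lemma natDegree_minpoly_tribRoot : (minpoly ℚ α).natDegree = 3 := by
  rw [minpoly_tribRoot]
  compute_degree!

end TribonacciRoot

section CompositumBasis

open Polynomial IntermediateField
open scoped goldenRatio

lemma linearIndependent_adjoinSimple_gen_pow {K L : Type*} [Field K] [Field L] [Algebra K L]
    {x : L} {d : ℕ} (hx : (minpoly K x).natDegree = d) :
    LinearIndependent K fun i : Fin d => AdjoinSimple.gen K x ^ (i : ℕ) := by
  rw [← hx, ← minpoly_gen K x]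
  exact linearIndependent_pow _

local notation "α" => tribRoot

lemma natDegree_minpoly_goldenRatio : (minpoly ℚ φ).natDegree = 2 := by
  have hmonic : (X ^ 2 - X - 1 : ℚ[X]).Monic := by monicity!
  have hdeg : (X ^ 2 - X - 1 : ℚ[X]).natDegree = 2 := by compute_degree!
  have hroot : aeval φ (X ^ 2 - X - 1 : ℚ[X]) = 0 := by
    simp only [map_sub, map_pow, aeval_X, map_one]
    linear_combination Real.goldenRatio_sq
  refine le_antisymm ?_ ?_
  · exact (natDegree_le_of_dvd (minpoly.dvd ℚ φ hroot) hmonic.ne_zero).trans_eq hdeg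
  · rw [minpoly.two_le_natDegree_iff ⟨_, hmonic, hroot⟩]
    exact Real.goldenRatio_irrational

lemma linearDisjoint_adjoin_tribRoot_goldenRatio : ℚ⟮α⟯.LinearDisjoint ℚ⟮φ⟯ := by
  have hα : IsIntegral ℚ α := minpoly.ne_zero_iff.1 fun h => by
    simpa [h] using natDegree_minpoly_tribRoot
  have hφ : IsIntegral ℚ φ := minpoly.ne_zero_iff.1 fun h => by
    simpa [h] using natDegree_minpoly_goldenRatio
  refine .of_finrank_coprime ?_
  rw [adjoin.finrank hα, adjoin.finrank hφ, natDegree_minpoly_tribRoot,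
    natDegree_minpoly_goldenRatio]
  decide

/-- The products `α ^ i * φ ^ j`, a basis of the degree-six field `ℚ(α, φ)`. -/
noncomputable def tribGoldenBasis (x : Fin 3 × Fin 2) : ℝ := α ^ (x.1 : ℕ) * φ ^ (x.2 : ℕ)

lemma linearIndependent_tribGoldenBasis : LinearIndependent ℤ tribGoldenBasis := by
  have hα := linearIndependent_adjoinSimple_gen_pow natDegree_minpoly_tribRoot
  have hφ := linearIndependent_adjoinSimple_gen_pow natDegree_minpoly_goldenRatio
  exact (linearDisjoint_adjoin_tribRoot_goldenRatio.linearIndependent_mul hα hφ).restrict_scalars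
    (R := ℤ) fun a b h => by simpa using h

lemma tribRoot_pow_ne_goldenRatio_pow {y : ℕ} (hy : y ≠ 0) (x : ℕ) : α ^ y ≠ φ ^ x := by
  intro h
  have hbot : φ ^ x ∈ (⊥ : IntermediateField ℚ ℝ) := by
    rw [← linearDisjoint_adjoin_tribRoot_goldenRatio.inf_eq_bot]
    exact ⟨h ▸ pow_mem (mem_adjoin_simple_self ℚ α) y, pow_mem (mem_adjoin_simple_self ℚ φ) x⟩
  obtain ⟨r, hr⟩ := mem_bot.1 hbot
  cases x with
  | zero => exact (one_lt_pow₀ one_lt_tribRoot hy).ne' (by simpa using h)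
  | succ x =>
    rw [← Real.goldenRatio_mul_fib_succ_add_fib] at hr
    exact ((Real.goldenRatio_irrational.mul_natCast (Nat.fib_pos.2 x.succ_pos).ne').add_natCast
      _).ne_rat r hr.symm

end CompositumBasis

section TribGoldenMultipliers

open scoped Matrix goldenRatio

local notation "α" => tribRoot

variable {B w : ℝ}

lemma isIntegralMultiplier_of_tribRoot {A : Matrix (Fin 3) (Fin 3) ℤ}
    (hA : ∀ i : Fin 3, ∑ j : Fin 3, A i j * α ^ (j : ℕ) = w * α ^ (i : ℕ))
    (hB : ∀ i, ∑ j, |(A i j : ℝ)| ≤ B) : IsIntegralMultiplier tribGoldenBasis B w :=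
  .tensor_left (b := fun i : Fin 3 => α ^ (i : ℕ)) (fun j : Fin 2 => φ ^ (j : ℕ))
    ⟨A, funext hA, hB⟩

lemma isIntegralMultiplier_of_goldenRatio {A : Matrix (Fin 2) (Fin 2) ℤ}
    (hA : ∀ i : Fin 2, ∑ j : Fin 2, A i j * φ ^ (j : ℕ) = w * φ ^ (i : ℕ))
    (hB : ∀ i, ∑ j, |(A i j : ℝ)| ≤ B) : IsIntegralMultiplier tribGoldenBasis B w :=
  .tensor_right (fun i : Fin 3 => α ^ (i : ℕ)) (c := fun j : Fin 2 => φ ^ (j : ℕ))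
    ⟨A, funext hA, hB⟩

lemma isIntegralMultiplier_tribRoot : IsIntegralMultiplier tribGoldenBasis 3 α := by
  refine isIntegralMultiplier_of_tribRoot (A := !![0, 1, 0; 0, 0, 1; 1, 1, 1])
    (fun i => ?_) fun i => ?_
  · fin_cases i <;> simp [Fin.sum_univ_succ]
    · ring
    · linear_combination -tribRoot_pow_three
  · fin_cases i <;> norm_num [Fin.sum_univ_succ]

lemma isIntegralMultiplier_inv_tribRoot : IsIntegralMultiplier tribGoldenBasis 3 α⁻¹ := by
  refine isIntegralMultiplier_of_tribRoot (A := !![-1, -1, 1; 1, 0, 0; 0, 1, 0])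
    (fun i => ?_) fun i => ?_
  · rw [inv_tribRoot]
    fin_cases i <;> simp [Fin.sum_univ_succ]
    · ring
    · linear_combination -tribRoot_pow_three
    · linear_combination -α * tribRoot_pow_three
  · fin_cases i <;> norm_num [Fin.sum_univ_succ]

/-- The derivative of the Tribonacci polynomial at its dominant root `α`: the dominant term of
`trib m` is `α ^ (m + 1) / tribDeriv`. -/
noncomputable def tribDeriv : ℝ := 3 * α ^ 2 - 2 * α - 1

lemma isIntegralMultiplier_tribDeriv : IsIntegralMultiplier tribGoldenBasis 8 tribDeriv := by
  refine isIntegralMultiplier_of_tribRoot (A := !![-1, -2, 3; 3, 2, 1; 1, 4, 3])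
    (fun i => ?_) fun i => ?_
  · rw [tribDeriv]
    fin_cases i <;> simp [Fin.sum_univ_succ]
    · ring
    · linear_combination -3 * tribRoot_pow_three
    · linear_combination (-3 * α - 1) * tribRoot_pow_three
  · fin_cases i <;> norm_num [Fin.sum_univ_succ]

lemma isIntegralMultiplier_goldenRatio : IsIntegralMultiplier tribGoldenBasis 2 φ := by
  refine isIntegralMultiplier_of_goldenRatio (A := !![0, 1; 1, 1]) (fun i => ?_) fun i => ?_
  · fin_cases i <;> simp [Fin.sum_univ_succ]
    · linear_combination -Real.goldenRatio_sq
  · fin_cases i <;> norm_num [Fin.sum_univ_succ]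

lemma isIntegralMultiplier_inv_goldenRatio : IsIntegralMultiplier tribGoldenBasis 2 φ⁻¹ := by
  refine isIntegralMultiplier_of_goldenRatio (A := !![-1, 1; 1, 0]) (fun i => ?_) fun i => ?_
  · rw [Real.inv_goldenRatio, ← Real.one_sub_goldenConj]
    fin_cases i <;> simp [Fin.sum_univ_succ]
    · ring
    · linear_combination -Real.goldenRatio_sq
  · fin_cases i <;> norm_num [Fin.sum_univ_succ]

lemma isIntegralMultiplier_sqrt_five : IsIntegralMultiplier tribGoldenBasis 3 √5 := by
  refine isIntegralMultiplier_of_goldenRatio (A := !![-1, 2; 2, 1]) (fun i => ?_) fun i => ?_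
  · rw [← Real.goldenRatio_sub_goldenConj, ← Real.one_sub_goldenConj]
    fin_cases i <;> simp [Fin.sum_univ_succ]
    · ring
    · linear_combination -2 * Real.goldenRatio_sq
  · fin_cases i <;> norm_num [Fin.sum_univ_succ]

lemma isIntegralMultiplier_tribRoot_pow_div_goldenRatio_pow (x y : ℕ) :
    IsIntegralMultiplier tribGoldenBasis (Real.exp (2 * (x + y : ℕ))) (α ^ y / φ ^ x) := by
  rw [div_eq_mul_inv, ← inv_pow]
  refine ((isIntegralMultiplier_tribRoot.pow y).mul
    (isIntegralMultiplier_inv_goldenRatio.pow x)).mono ?_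
  have h3 : (3 : ℝ) ≤ Real.exp 2 := by linarith [Real.add_one_le_exp 2]
  have h2 : (2 : ℝ) ≤ Real.exp 2 := by linarith
  calc (3 : ℝ) ^ y * 2 ^ x ≤ Real.exp (y * 2) * Real.exp (x * 2) :=
        mul_le_mul (pow_le_exp_mul (by norm_num) h3 y) (pow_le_exp_mul (by norm_num) h2 x)
          (by positivity) (Real.exp_pos _).le
    _ = Real.exp (2 * (x + y : ℕ)) := by
        rw [← Real.exp_add]
        push_cast
        ring_nf

/-- The quotient of the dominant terms of `fib n` and `trib m`, extended to integer indices. -/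
noncomputable def dominantRatio (n m : ℤ) : ℝ := φ ^ n / √5 / (α ^ (m + 1) / tribDeriv)

lemma isIntegralMultiplier_dominantRatio {n m : ℤ} (hn : |n| ≤ 26) (hm : |m| ≤ 21) :
    IsIntegralMultiplier tribGoldenBasis (Real.exp 77) ((5 : ℕ) * dominantRatio n m) := by
  have hratio : (5 : ℕ) * dominantRatio n m = √5 * tribDeriv * φ ^ n * α ^ (-(m + 1)) := by
    have h5 : √5 * √5 = (5 : ℕ) := by norm_num
    rw [← h5, dominantRatio, zpow_neg]
    field_simp
  rw [hratio]
  refine (((isIntegralMultiplier_sqrt_five.mul isIntegralMultiplier_tribDeriv).mul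
    (isIntegralMultiplier_goldenRatio.zpow isIntegralMultiplier_inv_goldenRatio n)).mul
    (isIntegralMultiplier_tribRoot.zpow isIntegralMultiplier_inv_tribRoot _)).mono ?_
  have hn' : n.natAbs ≤ 26 := by grind
  have hm' : (-(m + 1)).natAbs ≤ 22 := by grind
  calc (3 * 8 * 2 ^ n.natAbs * 3 ^ (-(m + 1)).natAbs : ℝ) ≤ 3 * 8 * 2 ^ 26 * 3 ^ 22 := by
        gcongr <;> norm_num
    _ ≤ 2 ^ 77 := by norm_num
    _ ≤ Real.exp ((77 : ℕ) * 1) :=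
        pow_le_exp_mul zero_le_two (by linarith [Real.exp_one_gt_d9]) 77
    _ = Real.exp 77 := by norm_num

end TribGoldenMultipliers

section DominantTerms

open scoped goldenRatio

local notation "α" => tribRoot

lemma abs_fib_sub_goldenRatio_pow_le (n : ℕ) : |(Nat.fib n : ℝ) - φ ^ n / √5| ≤ 1 := by
  have h5 : (1 : ℝ) ≤ √5 := Real.one_le_sqrt.2 (by norm_num)
  have hψ : |ψ| ≤ 1 :=
    abs_le.2 ⟨Real.neg_one_lt_goldenConj.le, Real.goldenConj_neg.le.trans zero_le_one⟩
  rw [Real.coe_fib_eq, ← sub_div, sub_sub_cancel_left, abs_div, abs_neg, abs_pow,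
    abs_of_pos (one_pos.trans_le h5), div_le_one (one_pos.trans_le h5)]
  exact (pow_le_one₀ (abs_nonneg _) hψ).trans h5

lemma lt_tribDeriv : 5 < tribDeriv := by
  rw [tribDeriv]
  nlinarith [lt_tribRoot]

lemma tribDeriv_lt : tribDeriv < 5.5 := by
  rw [tribDeriv]
  nlinarith [tribRoot_lt, lt_tribRoot]

lemma tribDeriv_pos : 0 < tribDeriv := by linarith [lt_tribDeriv]

lemma trib_add_three (m : ℕ) : trib (m + 3) = trib (m + 2) + trib (m + 1) + trib m := by
  rw [trib]

/-- The cofactor `X ^ 2 + (α - 1) * X + (α ^ 2 - α - 1)` of `X - α` in the Tribonacci polynomial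
isolates the dominant root. -/
lemma trib_cofactor_eq_tribRoot_pow (m : ℕ) :
    trib (m + 2) + (α - 1) * trib (m + 1) + (α ^ 2 - α - 1) * trib m = α ^ (m + 1) := by
  induction m with
  | zero => simp [trib]
  | succ m ih =>
    rw [trib_add_three]
    push_cast
    linear_combination α * ih - trib m * tribRoot_pow_three

/-- The error of the dominant-term approximation of `trib m`. -/
noncomputable def tribError (m : ℕ) : ℝ := trib m - α ^ (m + 1) / tribDeriv

lemma tribError_add_two (m : ℕ) :
    tribError (m + 2) = -(α - 1) * tribError (m + 1) - (α ^ 2 - α - 1) * tribError m := by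
  have hc : α ^ (m + 1) / tribDeriv * (3 * α ^ 2 - 2 * α - 1) = α ^ (m + 1) :=
    div_mul_cancel₀ _ tribDeriv_pos.ne'
  simp only [tribError, pow_succ] at hc ⊢
  linear_combination trib_cofactor_eq_tribRoot_pow m - hc

/-- The left-hand side is a norm from the quadratic extension of `ℚ(α)` generated by the complex
roots, so the recurrence multiplies it by `α⁻¹ = α ^ 2 - α - 1`. -/
lemma tribError_norm_le (m : ℕ) :
    tribError (m + 1) ^ 2 + (α - 1) * tribError (m + 1) * tribError m +
      (α ^ 2 - α - 1) * tribError m ^ 2 ≤ 0.3 := by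
  have hα := lt_tribRoot
  have hq : α ^ 2 - α - 1 ≤ 0.55 := by nlinarith [tribRoot_lt]
  have hq0 : 0 ≤ α ^ 2 - α - 1 := by nlinarith
  have hD := tribDeriv_pos
  induction m with
  | zero =>
    have h0 : tribError 0 = -(α / tribDeriv) := by simp [tribError, trib]
    have h1 : tribError 1 = 1 - α ^ 2 / tribDeriv := by simp [tribError, trib]
    have hu0 : 0 ≤ α / tribDeriv := div_nonneg tribRoot_pos.le hD.le
    have hu : α / tribDeriv ≤ 0.37 := by
      rw [div_le_iff₀ hD]
      linarith [tribRoot_lt, lt_tribDeriv]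
    have hv : 0.6 ≤ α ^ 2 / tribDeriv := by
      rw [le_div_iff₀ hD]
      nlinarith [tribDeriv_lt]
    have hv1 : α ^ 2 / tribDeriv ≤ 1 := by
      rw [div_le_one hD, tribDeriv]
      nlinarith
    rw [h0, zero_add, h1]
    have hcross : 0 ≤ (α - 1) * (1 - α ^ 2 / tribDeriv) * (α / tribDeriv) :=
      mul_nonneg (mul_nonneg (by linarith) (by linarith)) hu0
    have hv2 : (1 - α ^ 2 / tribDeriv) ^ 2 ≤ 0.4 ^ 2 := by gcongr; linarith
    have hu2 : (α ^ 2 - α - 1) * (α / tribDeriv) ^ 2 ≤ 0.55 * 0.37 ^ 2 := by gcongr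
    linarith
  | succ m ih =>
    calc _ = (α ^ 2 - α - 1) * (tribError (m + 1) ^ 2 +
          (α - 1) * tribError (m + 1) * tribError m + (α ^ 2 - α - 1) * tribError m ^ 2) := by
          rw [tribError_add_two]
          ring
      _ ≤ (α ^ 2 - α - 1) * 0.3 := mul_le_mul_of_nonneg_left ih hq0
      _ ≤ 0.3 := by linarith

lemma abs_trib_sub_tribRoot_pow_le (m : ℕ) : |trib m - α ^ (m + 1) / tribDeriv| ≤ 1 := by
  rw [← sq_le_one_iff_abs_le_one]
  have hdisc : 0.3 ≤ (α ^ 2 - α - 1) - ((α - 1) / 2) ^ 2 := by nlinarith [lt_tribRoot, tribRoot_lt]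
  have hsq : tribError m ^ 2 * 0.3 ≤
      tribError m ^ 2 * ((α ^ 2 - α - 1) - ((α - 1) / 2) ^ 2) := by gcongr
  change tribError m ^ 2 ≤ 1
  linarith [tribError_norm_le m, sq_nonneg (tribError (m + 1) + (α - 1) / 2 * tribError m)]

end DominantTerms

section LinearForm

open Real
open scoped goldenRatio

local notation "α" => tribRoot

lemma half_le_log_tribRoot : 1 / 2 ≤ log α := by
  have h : 1 ≤ log (α ^ 2) := by
    rw [le_log_iff_exp_le (pow_pos tribRoot_pos 2)]
    nlinarith [exp_one_lt_d9, lt_tribRoot]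
  rw [log_pow, Nat.cast_ofNat] at h
  linarith

lemma log_tribRoot_le : log α ≤ 2 / 3 := by
  have h : log (α ^ 3) ≤ 2 := by
    rw [log_le_iff_le_exp (pow_pos tribRoot_pos 3), show (2 : ℝ) = (2 : ℕ) * 1 by norm_num,
      exp_nat_mul]
    calc α ^ 3 ≤ 1.84 ^ 3 := pow_le_pow_left₀ tribRoot_pos.le tribRoot_lt.le 3
      _ ≤ 2.7182818283 ^ 2 := by norm_num
      _ ≤ exp 1 ^ 2 := pow_le_pow_left₀ (by norm_num) exp_one_gt_d9.le 2
  rw [log_pow, Nat.cast_ofNat] at h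
  linarith

lemma third_le_log_goldenRatio : 1 / 3 ≤ log φ := by
  have h := one_sub_inv_le_log_of_pos goldenRatio_pos
  have hφ : 3 / 2 ≤ φ := by nlinarith [goldenRatio_sq, goldenRatio_pos]
  have : φ⁻¹ ≤ 2 / 3 := inv_le_of_inv_le₀ (by norm_num) (by linarith)
  linarith

lemma log_goldenRatio_le : log φ ≤ 1 / 2 := by
  have h : log (φ ^ 2) ≤ 1 := by
    rw [log_le_iff_le_exp (pow_pos goldenRatio_pos 2)]
    nlinarith [exp_one_gt_d9, goldenRatio_sq, goldenRatio_lt_two]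
  rw [log_pow, Nat.cast_ofNat] at h
  linarith

lemma abs_log_one_add_le {t : ℝ} (ht : |t| ≤ 1 / 2) : |log (1 + t)| ≤ 2 * |t| := by
  have h := Complex.norm_log_one_add_half_le_self (z := t) (by simpa using ht)
  have hpos : 0 ≤ 1 + t := by linarith [(abs_le.1 ht).1]
  rw [← Complex.ofReal_one, ← Complex.ofReal_add, ← Complex.ofReal_log hpos, Complex.norm_real,
    Complex.norm_real, norm_eq_abs, norm_eq_abs] at h
  linarith [abs_nonneg t]

lemma dominantRatio_pos (n m : ℤ) : 0 < dominantRatio n m :=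
  div_pos (div_pos (zpow_pos goldenRatio_pos n) (by positivity))
    (div_pos (zpow_pos tribRoot_pos _) tribDeriv_pos)

lemma log_dominantRatio (n m : ℤ) :
    log (dominantRatio n m) = n * log φ - (m + 1) * log α + log (tribDeriv / √5) := by
  have hφ : φ ^ n ≠ 0 := zpow_ne_zero n goldenRatio_ne_zero
  have hα : α ^ (m + 1) ≠ 0 := zpow_ne_zero _ tribRoot_pos.ne'
  have hD := tribDeriv_pos.ne'
  have h5 : √5 ≠ 0 := by positivity
  rw [dominantRatio, log_div (div_ne_zero hφ h5) (div_ne_zero hα hD), log_div hφ h5, log_div hα hD,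
    log_div hD h5, log_zpow, log_zpow]
  push_cast
  ring

lemma abs_log_tribDeriv_div_sqrt_five_le : |log (tribDeriv / √5)| ≤ 1 := by
  have h5 : 2 ≤ √5 := le_sqrt_of_sq_le (by norm_num)
  have h5' : √5 ≤ 2.5 := sqrt_le_iff.2 (by norm_num)
  have hlow : 1 ≤ tribDeriv / √5 := by
    rw [le_div_iff₀ (by positivity)]
    linarith [lt_tribDeriv]
  have hup : tribDeriv / √5 ≤ exp 1 := by
    rw [div_le_iff₀ (by positivity)]
    nlinarith [tribDeriv_lt, exp_one_gt_d9, sq_sqrt (show (0 : ℝ) ≤ 5 by norm_num)]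
  rw [abs_of_nonneg (log_nonneg hlow)]
  exact (log_le_iff_le_exp (by linarith)).2 hup

lemma abs_log_dominantRatio_le {n m : ℤ} (hn : |n| ≤ 26) (hm : |m| ≤ 21) :
    |log (dominantRatio n m)| ≤ 29 := by
  have hφ0 := third_le_log_goldenRatio
  have hα0 := half_le_log_tribRoot
  have hnφ : |n * log φ| ≤ 26 * (1 / 2) := by
    rw [abs_mul, abs_of_pos (by linarith : 0 < log φ)]
    exact mul_le_mul (by exact_mod_cast hn) log_goldenRatio_le (by linarith) (by norm_num)
  have hmα : |(m + 1) * log α| ≤ 22 * (2 / 3) := by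
    have hm1 : |m + 1| ≤ 22 := (abs_add_le m 1).trans (by norm_num; linarith)
    rw [abs_mul, abs_of_pos (by linarith : 0 < log α)]
    exact mul_le_mul (by exact_mod_cast hm1) log_tribRoot_le (by linarith) (by norm_num)
  rw [log_dominantRatio]
  grind [abs_log_tribDeriv_div_sqrt_five_le]

lemma exp_half_le_tribRoot_pow (m : ℕ) : exp (m / 2) ≤ α ^ m := by
  rw [← le_log_iff_exp_le (pow_pos tribRoot_pos m), log_pow]
  linarith [mul_le_mul_of_nonneg_left half_le_log_tribRoot m.cast_nonneg]

lemma le_exp_natCast_of_le_pow {a : ℝ} {n : ℕ} (ha : a ≤ 2.718 ^ n) : a ≤ exp n := by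
  have h : (2.718 : ℝ) ≤ exp 1 := by linarith [exp_one_gt_d9]
  rw [← mul_one (n : ℝ), exp_nat_mul]
  exact ha.trans (pow_le_pow_left₀ (by norm_num) h n)

lemma abs_log_dominantRatio_le_of_fib_sub_trib {n m : ℕ}
    (h : (Nat.fib n : ℤ) - trib m = -22) (hm : 21 ≤ m) :
    |log (dominantRatio n m)| ≤ exp (6 - (m + 1) / 2) := by
  have hφ := abs_fib_sub_goldenRatio_pow_le n
  have hα := abs_trib_sub_tribRoot_pow_le m
  have hexp : exp ((m + 1) / 2) ≤ α ^ (m + 1) := by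
    exact_mod_cast exp_half_le_tribRoot_pow (m + 1)
  set A := α ^ (m + 1) / tribDeriv with hA
  have hApos : 0 < A := div_pos (pow_pos tribRoot_pos _) tribDeriv_pos
  have hAexp : exp ((m + 1) / 2) ≤ 5.5 * A := by
    rw [hA, mul_div_assoc', le_div_iff₀ tribDeriv_pos, mul_comm]
    exact mul_le_mul tribDeriv_lt.le hexp (exp_pos _).le (by norm_num)
  have hdiff : |φ ^ n / √5 - A| ≤ 24 := by
    have h' : (Nat.fib n : ℝ) - trib m = -22 := by exact_mod_cast h
    grind
  have hratio : dominantRatio n m = 1 + (φ ^ n / √5 - A) / A := by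
    rw [sub_div, div_self hApos.ne', add_sub_cancel, dominantRatio, hA]
    norm_cast
  have hsmall : 2 * |(φ ^ n / √5 - A) / A| ≤ exp (6 - (m + 1) / 2) := by
    rw [abs_div, abs_of_pos hApos, exp_sub, mul_div_assoc', div_le_div_iff₀ hApos (exp_pos _)]
    calc 2 * |φ ^ n / √5 - A| * exp ((m + 1) / 2) ≤ 2 * 24 * (5.5 * A) := by gcongr
      _ = 264 * A := by ring
      _ ≤ exp 6 * A := by
        gcongr
        exact le_exp_natCast_of_le_pow (n := 6) (by norm_num)
  have hm' : (21 : ℝ) ≤ m := by exact_mod_cast hm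
  have hone : exp (6 - (m + 1) / 2) ≤ 1 := exp_le_one_iff.2 (by linarith)
  rw [hratio]
  exact (abs_log_one_add_le (by linarith)).trans hsmall

lemma log_dominantRatio_eq_sub {M x y : ℕ} {n m n₀ m₀ : ℤ} (hn : n = n₀ + M * x)
    (hm : m = m₀ + M * y) :
    log (dominantRatio n m) = log (dominantRatio n₀ m₀) - M * log (α ^ y / φ ^ x) := by
  rw [log_div (pow_ne_zero y tribRoot_pos.ne') (pow_ne_zero x goldenRatio_ne_zero), log_pow,
    log_pow, log_dominantRatio, log_dominantRatio, hn, hm]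
  push_cast
  ring

lemma goldenRatio_exponent_le {M x y : ℕ} (hM : 90 < M)
    (hX : M * |log (α ^ y / φ ^ x)| ≤ 30) : x ≤ 2 * y := by
  by_contra! hxy
  have hxy' : 2 * (y : ℝ) + 1 ≤ x := by exact_mod_cast hxy
  have hlog : 1 / 3 ≤ -log (α ^ y / φ ^ x) := by
    rw [log_div (pow_ne_zero y tribRoot_pos.ne') (pow_ne_zero x goldenRatio_ne_zero), log_pow,
      log_pow]
    have hy := mul_le_mul_of_nonneg_left log_tribRoot_le (Nat.cast_nonneg' y)
    have hx := mul_le_mul_of_nonneg_left third_le_log_goldenRatio (Nat.cast_nonneg' x)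
    linarith
  have hM' : (90 : ℝ) < M := by exact_mod_cast hM
  nlinarith [neg_le_abs (log (α ^ y / φ ^ x))]

/-- The linear form `log (dominantRatio n m)` would be smaller than the Gelfond bound allows. -/
theorem eq_zero_of_fib_sub_trib {M n m x y : ℕ} {n₀ m₀ : ℤ} (hM : 6 * 10 ^ 16 ≤ M)
    (hM' : M ≤ 7 * 10 ^ 16) (hn₀ : |n₀| ≤ 26) (hm₀ : |m₀| ≤ 21) (hn : (n : ℤ) = n₀ + M * x)
    (hm : (m : ℤ) = m₀ + M * y) (h : (Nat.fib n : ℤ) - trib m = -22) : y = 0 := by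
  by_contra hy
  have hy1 : (1 : ℝ) ≤ y := by exact_mod_cast Nat.one_le_iff_ne_zero.2 hy
  have hMR : (6 * 10 ^ 16 : ℝ) ≤ M := by exact_mod_cast hM
  have hMR' : (M : ℝ) ≤ 7 * 10 ^ 16 := by exact_mod_cast hM'
  have hmlow : 6 * 10 ^ 16 * (y : ℝ) - 21 ≤ m := by
    have hmR : (m : ℝ) = m₀ + M * y := by exact_mod_cast hm
    have hm₀R : (-21 : ℝ) ≤ m₀ := by exact_mod_cast (abs_le.1 hm₀).1
    nlinarith
  have hm21 : 21 ≤ m := by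
    have : (21 : ℝ) ≤ m := by linarith
    exact_mod_cast this
  have hform := abs_log_dominantRatio_le_of_fib_sub_trib h hm21
  rw [log_dominantRatio_eq_sub hn hm] at hform
  have hη := abs_log_dominantRatio_le hn₀ hm₀
  have hX : M * |log (α ^ y / φ ^ x)| ≤ 30 := by
    have : exp (6 - (m + 1) / 2) ≤ 1 := exp_le_one_iff.2 (by linarith)
    rw [← Nat.abs_cast M, ← abs_mul]
    grind
  have hxy : (x : ℝ) ≤ 2 * y := by
    exact_mod_cast goldenRatio_exponent_le (by omega) hX
  have hlower := exp_neg_lt_abs_log_sub (H := x + y) linearIndependent_tribGoldenBasis (by simp)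
    (by omega) (div_pos (pow_pos tribRoot_pos y) (pow_pos goldenRatio_pos x))
    (mt (div_eq_one_iff_eq (pow_ne_zero x goldenRatio_ne_zero)).1
      (tribRoot_pow_ne_goldenRatio_pow hy x))
    (dominantRatio_pos n₀ m₀) (by norm_num)
    (isIntegralMultiplier_tribRoot_pow_div_goldenRatio_pow x y)
    (isIntegralMultiplier_dominantRatio hn₀ hm₀) (by norm_num; linarith [add_one_le_exp (77 : ℝ)])
    hX (hη.trans (by norm_num)) (by linarith)
    (le_exp_natCast_of_le_pow (n := 39) (le_trans hMR' (by norm_num)))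
  refine hform.not_gt (hlower.trans_le' (exp_le_exp.2 ?_))
  push_cast
  linarith

end LinearForm

section Shift

variable {R : Type*} [CommRing R] {u : ℕ → R} {Q N N' : ℕ} {r c d : ℕ × ℕ × ℕ}

/-- The shift by `N` acts on the sequence `u` as the polynomial `c₀ + c₁ X + c₂ X ^ 2` in the shift
by one. For `u` a recurrent sequence of order three, `c` is `X ^ N` reduced modulo the
characteristic polynomial. -/
def IsShift (u : ℕ → R) (N : ℕ) (c : ℕ × ℕ × ℕ) : Prop :=
  ∀ k, u (k + N) = c.1 * u k + c.2.1 * u (k + 1) + c.2.2 * u (k + 2)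

/-- Multiplication by `X` modulo `Q` and `X ^ 3 - r₂ X ^ 2 - r₁ X - r₀`. -/
def shiftSucc (Q : ℕ) (r c : ℕ × ℕ × ℕ) : ℕ × ℕ × ℕ :=
  (r.1 * c.2.2 % Q, (c.1 + r.2.1 * c.2.2) % Q, (c.2.1 + r.2.2 * c.2.2) % Q)

/-- The product of `c` and `d` modulo `Q` and `X ^ 3 - r₂ X ^ 2 - r₁ X - r₀`. -/
def shiftAdd (Q : ℕ) (r c d : ℕ × ℕ × ℕ) : ℕ × ℕ × ℕ :=
  let d' := shiftSucc Q r d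
  let d'' := shiftSucc Q r d'
  ((c.1 * d.1 + c.2.1 * d'.1 + c.2.2 * d''.1) % Q,
    (c.1 * d.2.1 + c.2.1 * d'.2.1 + c.2.2 * d''.2.1) % Q,
    (c.1 * d.2.2 + c.2.1 * d'.2.2 + c.2.2 * d''.2.2) % Q)

/-- `X ^ N` modulo `Q` and `X ^ 3 - r₂ X ^ 2 - r₁ X - r₀` by repeated squaring, where `fuel` bounds
the number of binary digits of `N`. -/
def shiftPow (Q : ℕ) (r : ℕ × ℕ × ℕ) : (fuel N : ℕ) → ℕ × ℕ × ℕ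
  | 0, _ => (1, 0, 0)
  | fuel + 1, N =>
    let c := shiftPow Q r fuel (N / 2)
    let cc := shiftAdd Q r c c
    if N % 2 = 0 then cc else shiftSucc Q r cc

lemma isShift_zero : IsShift u 0 (1, 0, 0) := fun k => by simp

variable [CharP R Q]

lemma IsShift.succ (hu : IsShift u 3 r) (hc : IsShift u N c) :
    IsShift u (N + 1) (shiftSucc Q r c) := fun k => by
  have h := hc (k + 1)
  rw [add_assoc k 1 2, hu k] at h
  rw [add_comm N, ← add_assoc, h]
  simp only [shiftSucc, ← CharP.cast_eq_mod R Q]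
  push_cast
  ring_nf

lemma IsShift.add (hu : IsShift u 3 r) (hc : IsShift u N c) (hd : IsShift u N' d) :
    IsShift u (N + N') (shiftAdd Q r c d) := fun k => by
  have h := hc (k + N')
  have h1 := hu.succ (Q := Q) hd
  rw [add_assoc k N' 1, add_assoc k N' 2, hd, h1, hu.succ (Q := Q) h1] at h
  rw [add_comm N, ← add_assoc, h]
  simp only [shiftAdd, ← CharP.cast_eq_mod R Q]
  push_cast
  ring

lemma isShift_shiftPow (hu : IsShift u 3 r) {fuel : ℕ} (hN : N < 2 ^ fuel) :
    IsShift u N (shiftPow Q r fuel N) := by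
  induction fuel generalizing N with
  | zero =>
    obtain rfl : N = 0 := by simpa using hN
    exact isShift_zero
  | succ fuel ih =>
    have hhalf := ih (N := N / 2) (by rw [pow_succ] at hN; omega)
    have hdouble := hu.add (Q := Q) hhalf hhalf
    rw [shiftPow]
    split_ifs with hpar
    · convert hdouble using 1
      omega
    · convert hu.succ (Q := Q) hdouble using 1
      omega

lemma isShift_shiftPow_log2 (hu : IsShift u 3 r) (N : ℕ) :
    IsShift u N (shiftPow Q r (N.log2 + 1) N) :=
  isShift_shiftPow hu Nat.lt_log2_self

/-- The value modulo `Q` at `a + N` of a sequence with recurrence `r` and initial values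
`0, 1, 1`. -/
def recValue (Q : ℕ) (r : ℕ × ℕ × ℕ) (a N : ℕ) : ℕ :=
  let c := shiftAdd Q r (shiftPow Q r (a.log2 + 1) a) (shiftPow Q r (N.log2 + 1) N)
  (c.2.1 + c.2.2) % Q

lemma natCast_recValue (hu : IsShift u 3 r) (h0 : u 0 = 0) (h1 : u 1 = 1) (h2 : u 2 = 1)
    (a N : ℕ) : (recValue Q r a N : R) = u (a + N) := by
  have h := hu.add (Q := Q) (isShift_shiftPow_log2 hu a) (isShift_shiftPow_log2 hu N) 0
  rw [zero_add, zero_add, zero_add, h0, h1, h2, mul_zero, zero_add, mul_one, mul_one] at h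
  rw [h, recValue, ← CharP.cast_eq_mod R Q, Nat.cast_add]

lemma periodic_of_shiftPow_eq (hu : IsShift u 3 r)
    (hN : shiftPow Q r (N.log2 + 1) N = (1, 0, 0)) : Function.Periodic u N := fun k => by
  simpa [hN] using isShift_shiftPow_log2 (Q := Q) hu N k

end Shift

section Sieve

/-- The coefficients of `fib (k + 3) = fib k + 2 * fib (k + 1)`. Using order three gives `fib` and
`trib` the same initial values. -/
def fibRec : ℕ × ℕ × ℕ := (1, 2, 0)

/-- The coefficients of the Tribonacci recurrence. -/
def tribRec : ℕ × ℕ × ℕ := (1, 1, 1)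

lemma isShift_fib (R : Type*) [CommRing R] : IsShift (fun k => (Nat.fib k : R)) 3 fibRec :=
  fun k => by
    have h : Nat.fib (k + 3) = Nat.fib k + 2 * Nat.fib (k + 1) := by
      rw [Nat.fib_add_two, Nat.fib_add_two]
      ring
    simp [fibRec, h]

lemma isShift_trib (R : Type*) [CommRing R] : IsShift (fun k => (trib k : R)) 3 tribRec :=
  fun k => by
    simp only [tribRec, trib]
    push_cast
    ring

/-- The residues modulo `M * p` above `a` modulo `M`, with the corresponding values modulo `Q`. -/
def liftsWithValue (Q : ℕ) (r : ℕ × ℕ × ℕ) (M p a : ℕ) : List (ℕ × ℕ) :=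
  (List.range p).map fun i => (a + M * i, recValue Q r a (M * i))

/-- Lift the pairs of residues in `L` from modulus `M` to modulus `M * p`, keeping those with
`fib n - trib m = -22` modulo `Q`. -/
def sieveStep (Q M p : ℕ) (L : List (ℕ × ℕ)) : List (ℕ × ℕ) :=
  L.flatMap fun q =>
    (((liftsWithValue Q fibRec M p q.1).product (liftsWithValue Q tribRec M p q.2)).filter
      fun s => (s.1.2 + 22) % Q = s.2.2 % Q).map fun s => (s.1.1, s.2.1)

/-- Run `sieveStep` for the given pairs `(Q, p)`, starting from modulus `M`. -/
def sieve : List (ℕ × ℕ) → ℕ → List (ℕ × ℕ) → List (ℕ × ℕ)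
  | [], _, L => L
  | (Q, p) :: steps, M, L => sieve steps (M * p) (sieveStep Q M p L)

/-- Check for each step `(Q, p)` from modulus `M` that both sequences modulo `Q` have period
`M * p`. -/
def checkPeriods : List (ℕ × ℕ) → ℕ → Bool
  | [], _ => true
  | (Q, p) :: steps, M =>
    p != 0 && shiftPow Q fibRec ((M * p).log2 + 1) (M * p) == (1, 0, 0) &&
    shiftPow Q tribRec ((M * p).log2 + 1) (M * p) == (1, 0, 0) && checkPeriods steps (M * p)

/-- Every solution of `fib n - trib m = -22` lies modulo `M` in the list `L`. -/
def Covers (M : ℕ) (L : List (ℕ × ℕ)) : Prop :=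
  ∀ n m : ℕ, (Nat.fib n : ℤ) - trib m = -22 → (n % M, m % M) ∈ L

lemma mem_liftsWithValue {Q M p : ℕ} {r : ℕ × ℕ × ℕ} (hp : p ≠ 0) (n : ℕ) :
    (n % (M * p), recValue Q r (n % M) (M * (n / M % p))) ∈ liftsWithValue Q r M p (n % M) :=
  List.mem_map.2 ⟨n / M % p, List.mem_range.2 (Nat.mod_lt _ (Nat.pos_of_ne_zero hp)),
    by rw [Nat.mod_mul]⟩

lemma natCast_recValue_of_periodic {R : Type*} [CommRing R] {u : ℕ → R} {Q M p : ℕ} [CharP R Q]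
    {r : ℕ × ℕ × ℕ} (hu : IsShift u 3 r) (h0 : u 0 = 0) (h1 : u 1 = 1) (h2 : u 2 = 1)
    (hper : Function.Periodic u (M * p)) (n : ℕ) :
    (recValue Q r (n % M) (M * (n / M % p)) : R) = u n := by
  rw [natCast_recValue hu h0 h1 h2, ← Nat.mod_mul, hper.map_mod_nat]

lemma covers_sieveStep {Q M p : ℕ} {L : List (ℕ × ℕ)} (hL : Covers M L) (hp : p ≠ 0)
    (hfib : Function.Periodic (fun k => (Nat.fib k : ZMod Q)) (M * p))
    (htrib : Function.Periodic (fun k => (trib k : ZMod Q)) (M * p)) :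
    Covers (M * p) (sieveStep Q M p L) := fun n m h => by
  have hF := natCast_recValue_of_periodic (isShift_fib (ZMod Q)) (by simp) (by simp) (by simp)
    hfib n
  have hT := natCast_recValue_of_periodic (isShift_trib (ZMod Q)) (by simp [trib]) (by simp [trib])
    (by simp [trib]) htrib m
  refine List.mem_flatMap.2 ⟨_, hL n m h, List.mem_map.2 ⟨(_, _), List.mem_filter.2
    ⟨List.pair_mem_product.2 ⟨mem_liftsWithValue hp n, mem_liftsWithValue hp m⟩, ?_⟩, rfl⟩⟩
  rw [decide_eq_true_eq, ← ZMod.natCast_eq_natCast_iff', Nat.cast_add, hF, hT]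
  have h' : (Nat.fib n : ZMod Q) - trib m = -22 := by exact_mod_cast congrArg (Int.cast) h
  push_cast
  linear_combination h'

lemma covers_sieve {steps : List (ℕ × ℕ)} {M : ℕ} {L : List (ℕ × ℕ)} (hL : Covers M L)
    (hsteps : checkPeriods steps M) :
    Covers (M * (steps.map Prod.snd).prod) (sieve steps M L) := by
  induction steps generalizing M L with
  | nil => simpa [sieve] using hL
  | cons s steps ih =>
    simp only [checkPeriods, Bool.and_eq_true, bne_iff_ne, beq_iff_eq] at hsteps
    obtain ⟨⟨⟨hp, hfib⟩, htrib⟩, hrest⟩ := hsteps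
    rw [List.map_cons, List.prod_cons, ← mul_assoc]
    exact ih (covers_sieveStep hL hp (periodic_of_shiftPow_eq (isShift_fib _) hfib)
      (periodic_of_shiftPow_eq (isShift_trib _) htrib)) hrest

/-- The pairs `(Q, p)` of the sieve. Each `Q` is chosen so that both sequences modulo `Q` have
period `M * p`, where `M` is the product of the preceding values of `p`. -/
def sieveSteps : List (ℕ × ℕ) :=
  [(56, 48), (5096, 7), (2550899624, 5), (203291, 11), (18829, 3), (7561, 3), (47521, 2), (1621, 3),
    (748441, 3), (408241, 3), (401, 5), (1425601, 2), (4481, 2), (127, 2), (15361, 2), (2534401, 2),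
    (2405701, 3), (328051, 3), (7001, 5), (11251, 5), (206251, 5), (437501, 5), (7351, 7),
    (22639, 7), (240101, 7), (3631, 11), (1239041, 2)]

/-- The modulus reached by `sieveSteps`. -/
def sieveModulus : ℕ := 60995464992000000

/-- The solutions of `F n - T m = -22`, with both sequences extended to negative indices, that
survive the sieve. -/
def integerSolutions : List (ℤ × ℤ) :=
  [(3, 7), (-3, 7), (26, 21), (-8, 1), (-8, 2), (-8, -2), (-8, -7), (9, -16), (-9, -16)]

lemma prod_sieveSteps : (sieveSteps.map Prod.snd).prod = sieveModulus := by
  decide +kernel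

lemma checkPeriods_sieveSteps : checkPeriods sieveSteps 1 := by
  decide +kernel

lemma sieve_sieveSteps : ∀ q ∈ sieve sieveSteps 1 [(0, 0)], ∃ s ∈ integerSolutions,
    q.1 = s.1 % sieveModulus ∧ q.2 = s.2 % sieveModulus := by
  decide +kernel

lemma covers_sieve_sieveSteps : Covers sieveModulus (sieve sieveSteps 1 [(0, 0)]) := by
  have h : Covers 1 [(0, 0)] := fun n m _ => by simp [Nat.mod_one]
  simpa [prod_sieveSteps] using covers_sieve h checkPeriods_sieveSteps

lemma exists_eq_add_mul_of_mod_eq {M n : ℕ} {a : ℤ} (h : ((n % M : ℕ) : ℤ) = a % M)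
    (ha : a < M) : ∃ x : ℕ, (n : ℤ) = a + M * x := by
  have hmod : a ≡ n [ZMOD M] := by rw [Int.ModEq, ← h, Int.natCast_mod]
  obtain ⟨k, hk⟩ := hmod.dvd
  have hk0 : 0 ≤ k := by
    by_contra! hneg
    nlinarith [Int.add_one_le_iff.2 hneg]
  lift k to ℕ using hk0
  exact ⟨k, by linarith⟩

lemma exists_lift_of_fib_sub_trib {n m : ℕ} (h : (Nat.fib n : ℤ) - trib m = -22) :
    ∃ s ∈ integerSolutions, ∃ x y : ℕ, (n : ℤ) = s.1 + sieveModulus * x ∧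
      (m : ℤ) = s.2 + sieveModulus * y := by
  obtain ⟨s, hs, hn, hm⟩ := sieve_sieveSteps _ (covers_sieve_sieveSteps n m h)
  have hlt : ∀ s ∈ integerSolutions, s.1 < sieveModulus ∧ s.2 < sieveModulus := by decide
  obtain ⟨x, hx⟩ := exists_eq_add_mul_of_mod_eq hn (hlt s hs).1
  obtain ⟨y, hy⟩ := exists_eq_add_mul_of_mod_eq hm (hlt s hs).2
  exact ⟨s, hs, x, y, hx, hy⟩

end Sieve

lemma trib_seven : trib 7 = 24 := by decide

lemma trib_twentyone : trib 21 = 121415 := by decide +kernel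

lemma eq_seven_or_eq_twentyone_of_fib_sub_trib {n m : ℕ} (hm : 2 ≤ m)
    (h : (Nat.fib n : ℤ) - trib m = -22) : m = 7 ∨ m = 21 := by
  obtain ⟨s, hs, x, y, hx, hy⟩ := exists_lift_of_fib_sub_trib h
  have hbound : ∀ s ∈ integerSolutions, |s.1| ≤ 26 ∧ |s.2| ≤ 21 := by decide
  have hs2 : ∀ s ∈ integerSolutions, s.2 ≤ 2 ∨ s.2 = 7 ∨ s.2 = 21 := by decide
  have hy0 : y = 0 := eq_zero_of_fib_sub_trib (by norm_num [sieveModulus])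
    (by norm_num [sieveModulus]) (hbound s hs).1 (hbound s hs).2 hx hy h
  have hm2 : m ≠ 2 := by
    rintro rfl
    simp only [trib] at h
    omega
  have := hs2 s hs
  rw [hy0, Nat.cast_zero, mul_zero, add_zero] at hy
  omega

/-- The only representations of `-22` as `F n - T m` with `n, m ≥ 2` are
`(n, m) ∈ {(3,7), (26,21)}`. -/
theorem fib_sub_trib_eq_neg_twentytwo :
    {p : ℕ × ℕ | 2 ≤ p.1 ∧ 2 ≤ p.2 ∧ (Nat.fib p.1 : ℤ) - trib p.2 = -22} =
      ({(3, 7), (26, 21)} : Set (ℕ × ℕ)) := by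
  ext ⟨n, m⟩
  simp only [Set.mem_ofPred_eq, Set.mem_insert_iff, Set.mem_singleton_iff, Prod.mk.injEq]
  constructor
  · rintro ⟨hn, hm, h⟩
    obtain rfl | rfl := eq_seven_or_eq_twentyone_of_fib_sub_trib hm h
    · rw [trib_seven] at h
      have hfib : Nat.fib n = Nat.fib 3 := by norm_num; omega
      exact Or.inl ⟨Nat.fib_strictMonoOn.injOn hn (by simp) hfib, rfl⟩
    · rw [trib_twentyone] at h
      have hfib : Nat.fib n = Nat.fib 26 := by norm_num; omega
      exact Or.inr ⟨Nat.fib_strictMonoOn.injOn hn (by simp) hfib, rfl⟩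
  · rintro (⟨rfl, rfl⟩ | ⟨rfl, rfl⟩)
    · norm_num [trib_seven]
    · norm_num [trib_twentyone]
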